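/- arXiv:1307.0313 — 4 statements merged into one kernel-verified Lean document; each statement's English description precedes it below -/
import Mathlib

section
/- (Shargorodsky) Let A be a self-adjoint operator with domain D(A) in a separable complex Hilbert space H, and let 𝓛 ⊆ D(A) be a nonzero finite-dimensional subspace. If μ ∈ Spec₂(A, 𝓛), then the closed interval [Re(μ) − |Im(μ)|, Re(μ) + |Im(μ)|] intersects Spec(A); that is, there exists λ ∈ Spec(A) with |λ − Re(μ)| ≤ |Im(μ)|. -/
open scoped InnerProductSpace

variable {H : Type*} [NormedAddCommGroup H] [InnerProductSpace ℂ H] [CompleteSpace H]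

/-- `z` belongs to the resolvent set of the (possibly unbounded) operator `T`. -/
def HasBoundedResolvent (T : H →ₗ.[ℂ] H) (z : ℂ) : Prop :=
  ∃ R : H →L[ℂ] H,
    (∀ y : H, ∃ h : R y ∈ T.domain, z • R y - T ⟨R y, h⟩ = y) ∧
    (∀ x : T.domain, R (z • (x : H) - T x) = (x : H))

/-- The spectrum of a (possibly unbounded) operator given as a `LinearPMap`. -/
def pSpectrum (T : H →ₗ.[ℂ] H) : Set ℂ :=
  {z : ℂ | ¬ HasBoundedResolvent T z}

/-- The second order spectrum of `T` relative to a subspace `L ⊆ D(T)`. -/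
def secondOrderSpectrum (T : H →ₗ.[ℂ] H) (L : Submodule ℂ T.domain) : Set ℂ :=
  {z : ℂ | ∃ u : L, u ≠ 0 ∧ ∀ v : L,
    ⟪T (u : T.domain) - z • ((u : T.domain) : H),
      T (v : T.domain) - (starRingEnd ℂ z) • ((v : T.domain) : H)⟫_ℂ = 0}

/-!
Taking `v = u` in the definition of the second order spectrum and comparing real parts gives
`‖(T - Re μ) u‖ = |Im μ| ‖u‖`. If `Re μ` is in the resolvent set, then `R = (Re μ - T)⁻¹` is
symmetric and `1 ≤ |Im μ| ‖R‖`. One of `s = ±‖R‖` is in the spectrum of `R`: otherwise `‖R‖² - R²`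
would be bounded below, which fails on unit vectors `x` with `‖R x‖` close to `‖R‖`. Then
`Re μ - s⁻¹` is in the spectrum of `T`, at distance `‖R‖⁻¹ ≤ |Im μ|` from `Re μ`.
-/

theorem exists_mul_opNorm_sq_sub_lt_norm_sq {𝕜 E F : Type*} [NontriviallyNormedField 𝕜]
    [NormedAddCommGroup E] [NormedSpace 𝕜 E] [Nontrivial E] [SeminormedAddCommGroup F]
    [NormedSpace 𝕜 F] (R : E →L[𝕜] F) (k : ℝ) :
    ∃ x : E, k * (‖R‖ ^ 2 * ‖x‖ ^ 2 - ‖R x‖ ^ 2) < ‖x‖ ^ 2 := by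
  by_contra! h
  obtain ⟨x, hx⟩ := exists_ne (0 : E)
  have hx_pos : 0 < ‖x‖ ^ 2 := pow_pos (norm_pos_iff.mpr hx) 2
  have h_gap : 0 ≤ ‖R‖ ^ 2 * ‖x‖ ^ 2 - ‖R x‖ ^ 2 := by
    rw [sub_nonneg, ← mul_pow]
    gcongr
    exact R.le_opNorm x
  have hk : 0 < k := pos_of_mul_pos_left (hx_pos.trans_le (h x)) h_gap
  have hR : 0 < ‖R‖ := by
    refine (norm_nonneg R).lt_of_ne' fun h_zero ↦ ?_
    have := h x
    rw [h_zero] at this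
    nlinarith [sq_nonneg ‖R x‖]
  have h_norm_le : ‖R‖ ≤ √(‖R‖ ^ 2 - k⁻¹) := by
    refine R.opNorm_le_bound (Real.sqrt_nonneg _) fun y ↦ ?_
    rw [← Real.sqrt_sq (norm_nonneg y), ← Real.sqrt_mul' _ (sq_nonneg ‖y‖)]
    refine Real.le_sqrt_of_sq_le ?_
    have := (inv_mul_le_iff₀ hk).mpr (h y)
    linarith
  exact h_norm_le.not_gt ((Real.sqrt_lt' hR).mpr (sub_lt_self _ (inv_pos.mpr hk)))

section SymmetricBounded

variable {𝕜 E : Type*} [RCLike 𝕜] [NormedAddCommGroup E] [InnerProductSpace 𝕜 E]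

theorem re_inner_sub_smul_sub_conj_smul (x y : E) (z : 𝕜) :
    RCLike.re ⟪y - z • x, y - (starRingEnd 𝕜 z) • x⟫_𝕜 =
      ‖y - (RCLike.re z : 𝕜) • x‖ ^ 2 - (RCLike.im z * ‖x‖) ^ 2 := by
  have h_symm : RCLike.re ⟪y, x⟫_𝕜 = RCLike.re ⟪x, y⟫_𝕜 := inner_re_symm y x
  have h_skew : RCLike.im ⟪y, x⟫_𝕜 = -RCLike.im ⟪x, y⟫_𝕜 := inner_im_symm y x
  rw [@norm_sub_sq 𝕜]
  simp only [inner_sub_left, inner_sub_right, inner_smul_left, inner_smul_right,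
    inner_self_eq_norm_sq_to_K, norm_smul, map_sub, RCLike.mul_re, RCLike.mul_im, RCLike.conj_re,
    RCLike.conj_im, RCLike.ofReal_re, RCLike.ofReal_im, RCLike.norm_ofReal, mul_pow, sq_abs,
    ← RCLike.ofReal_pow, h_symm, h_skew]
  ring

variable {R : E →L[𝕜] E}

theorem norm_sq_smul_sub_apply_apply_sq_le (hR : (R : E →ₗ[𝕜] E).IsSymmetric) (x : E) :
    ‖(‖R‖ : 𝕜) ^ 2 • x - R (R x)‖ ^ 2 ≤ ‖R‖ ^ 2 * (‖R‖ ^ 2 * ‖x‖ ^ 2 - ‖R x‖ ^ 2) := by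
  have h_inner : RCLike.re ⟪x, R (R x)⟫_𝕜 = ‖R x‖ ^ 2 := by
    rw [← inner_self_eq_norm_sq (𝕜 := 𝕜)]
    exact congrArg RCLike.re (hR x (R x)).symm
  have h_bound : ‖R (R x)‖ ^ 2 ≤ ‖R‖ ^ 2 * ‖R x‖ ^ 2 := by
    rw [← mul_pow]
    gcongr
    exact R.le_opNorm (R x)
  calc ‖(‖R‖ : 𝕜) ^ 2 • x - R (R x)‖ ^ 2
      = (‖R‖ ^ 2 * ‖x‖) ^ 2 - 2 * (‖R‖ ^ 2 * ‖R x‖ ^ 2) + ‖R (R x)‖ ^ 2 := by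
        rw [@norm_sub_sq 𝕜, ← RCLike.ofReal_pow, inner_smul_left, RCLike.conj_ofReal,
          RCLike.re_ofReal_mul, h_inner, norm_smul, RCLike.norm_ofReal,
          abs_of_nonneg (sq_nonneg ‖R‖)]
    _ ≤ ‖R‖ ^ 2 * (‖R‖ ^ 2 * ‖x‖ ^ 2 - ‖R x‖ ^ 2) := by linarith

theorem not_isUnit_norm_sq_smul_one_sub_mul_self [Nontrivial E]
    (hR : (R : E →ₗ[𝕜] E).IsSymmetric) :
    ¬IsUnit ((‖R‖ : 𝕜) ^ 2 • (1 : E →L[𝕜] E) - R * R) := by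
  rintro ⟨U, hU⟩
  set V : E →L[𝕜] E := ↑U⁻¹
  obtain ⟨x, hx⟩ := exists_mul_opNorm_sq_sub_lt_norm_sq R (‖V‖ ^ 2 * ‖R‖ ^ 2)
  have h_inv : V ((‖R‖ : 𝕜) ^ 2 • x - R (R x)) = x := by
    have h := congrArg (· x) U.inv_mul
    rwa [hU] at h
  refine hx.not_ge ?_
  calc ‖x‖ ^ 2
      = ‖V ((‖R‖ : 𝕜) ^ 2 • x - R (R x))‖ ^ 2 := by rw [h_inv]
    _ ≤ (‖V‖ * ‖(‖R‖ : 𝕜) ^ 2 • x - R (R x)‖) ^ 2 := by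
        gcongr
        exact V.le_opNorm _
    _ ≤ ‖V‖ ^ 2 * (‖R‖ ^ 2 * (‖R‖ ^ 2 * ‖x‖ ^ 2 - ‖R x‖ ^ 2)) := by
        rw [mul_pow]
        gcongr
        exact norm_sq_smul_sub_apply_apply_sq_le hR x
    _ = ‖V‖ ^ 2 * ‖R‖ ^ 2 * (‖R‖ ^ 2 * ‖x‖ ^ 2 - ‖R x‖ ^ 2) := by ring

theorem norm_mem_or_neg_norm_mem_spectrum [Nontrivial E] (hR : (R : E →ₗ[𝕜] E).IsSymmetric) :
    (‖R‖ : 𝕜) ∈ spectrum 𝕜 R ∨ -(‖R‖ : 𝕜) ∈ spectrum 𝕜 R := by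
  by_contra! h
  obtain ⟨h_pos, h_neg⟩ := h
  have h_factor (r : 𝕜) : r ^ 2 • (1 : E →L[𝕜] E) - R * R =
      -((algebraMap 𝕜 (E →L[𝕜] E) r - R) * (algebraMap 𝕜 (E →L[𝕜] E) (-r) - R)) := by
    simp only [Algebra.algebraMap_eq_smul_one, sub_mul, mul_sub, smul_mul_assoc, mul_smul_comm,
      one_mul, mul_one]
    module
  apply not_isUnit_norm_sq_smul_one_sub_mul_self hR
  rw [h_factor]
  exact ((spectrum.notMem_iff.mp h_pos).mul (spectrum.notMem_iff.mp h_neg)).neg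

end SymmetricBounded

/-- `R` is the resolvent of `T` at `z`, a continuous two-sided inverse of `z - T`. It names the
witness in `HasBoundedResolvent`, so that resolvents at different points can be compared. -/
structure IsResolventAt {𝕜 E : Type*} [Ring 𝕜] [AddCommGroup E] [Module 𝕜 E] [TopologicalSpace E]
    (T : E →ₗ.[𝕜] E) (z : 𝕜) (R : E →L[𝕜] E) : Prop where
  mem_domain (y : E) : R y ∈ T.domain
  smul_sub_apply (y : E) : z • R y - T ⟨R y, mem_domain y⟩ = y
  apply_smul_sub (x : T.domain) : R (z • (x : E) - T x) = x

namespace IsResolventAt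

section CommRing

variable {𝕜 E : Type*} [CommRing 𝕜] [AddCommGroup E] [Module 𝕜 E] [TopologicalSpace E]
  {T : E →ₗ.[𝕜] E} {z w : 𝕜} {R S : E →L[𝕜] E}

theorem ne_zero [Nontrivial E] (hR : IsResolventAt T z R) : R ≠ 0 := by
  rintro rfl
  obtain ⟨y, hy⟩ := exists_ne (0 : E)
  have h_zero : T ⟨0, hR.mem_domain y⟩ = 0 := T.map_zero
  have h := hR.smul_sub_apply y
  simp only [_root_.zero_apply, smul_zero, h_zero, sub_zero] at h
  exact hy h.symm

variable [IsTopologicalAddGroup E] [ContinuousConstSMul 𝕜 E]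

theorem sub_eq_smul_mul (hR : IsResolventAt T z R) (hS : IsResolventAt T w S) :
    S - R = (z - w) • (R * S) := by
  ext y
  have h_shift : z • S y - T ⟨S y, hS.mem_domain y⟩ = y + (z - w) • S y := calc
    _ = (w • S y - T ⟨S y, hS.mem_domain y⟩) + (z - w) • S y := by module
    _ = y + (z - w) • S y := by rw [hS.smul_sub_apply]
  have h := hR.apply_smul_sub ⟨S y, hS.mem_domain y⟩
  rw [h_shift, map_add, map_smul] at h
  exact sub_eq_of_eq_add' h.symm

theorem isUnit_one_sub_smul (hR : IsResolventAt T z R) (hS : IsResolventAt T w S) :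
    IsUnit (1 - (z - w) • R) := by
  refine isUnit_iff_exists.mpr ⟨1 + (z - w) • S, ?_, ?_⟩
  · have h : (1 - (z - w) • R) * (1 + (z - w) • S) =
        1 + (z - w) • ((S - R) - (z - w) • (R * S)) := by
      simp only [sub_mul, mul_add, one_mul, mul_one, smul_mul_assoc, mul_smul_comm]
      module
    rw [h, hR.sub_eq_smul_mul hS, sub_self, smul_zero, add_zero]
  · have h : (1 + (z - w) • S) * (1 - (z - w) • R) =
        1 - (z - w) • ((R - S) - (w - z) • (S * R)) := by
      simp only [add_mul, mul_sub, one_mul, mul_one, smul_mul_assoc, mul_smul_comm]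
      module
    rw [h, hS.sub_eq_smul_mul hR, sub_self, smul_zero, sub_zero]

end CommRing

theorem inv_sub_notMem_spectrum {𝕜 E : Type*} [Field 𝕜] [AddCommGroup E] [Module 𝕜 E]
    [TopologicalSpace E] [IsTopologicalAddGroup E] [ContinuousConstSMul 𝕜 E] {T : E →ₗ.[𝕜] E}
    {z w : 𝕜} {R S : E →L[𝕜] E} (hR : IsResolventAt T z R) (hS : IsResolventAt T w S)
    (hzw : z ≠ w) : (z - w)⁻¹ ∉ spectrum 𝕜 R := by
  have h_ne : z - w ≠ 0 := sub_ne_zero.mpr hzw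
  have h_factor : algebraMap 𝕜 (E →L[𝕜] E) (z - w)⁻¹ - R =
      (Units.mk0 (z - w) h_ne)⁻¹ • (1 - (z - w) • R) := by
    simp [Units.smul_def, smul_sub, smul_smul, h_ne, Algebra.algebraMap_eq_smul_one]
  rw [spectrum.notMem_iff, h_factor]
  exact (hR.isUnit_one_sub_smul hS).smul _

theorem isSymmetric {𝕜 E : Type*} [RCLike 𝕜] [NormedAddCommGroup E] [InnerProductSpace 𝕜 E]
    {T : E →ₗ.[𝕜] E} {R : E →L[𝕜] E} {a : ℝ} (hT : T.IsFormalAdjoint T)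
    (hR : IsResolventAt T (a : 𝕜) R) : (R : E →ₗ[𝕜] E).IsSymmetric := by
  intro y w
  change ⟪R y, w⟫_𝕜 = ⟪y, R w⟫_𝕜
  have h_symm := hT ⟨R y, hR.mem_domain y⟩ ⟨R w, hR.mem_domain w⟩
  conv_lhs => rw [← hR.smul_sub_apply w]
  conv_rhs => rw [← hR.smul_sub_apply y]
  simp only [inner_sub_left, inner_sub_right, inner_smul_left, inner_smul_right,
    RCLike.conj_ofReal, h_symm]

end IsResolventAt

section Spectrum

variable {E : Type*} [NormedAddCommGroup E] [InnerProductSpace ℂ E] {T : E →ₗ.[ℂ] E}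

theorem hasBoundedResolvent_iff_exists_isResolventAt {z : ℂ} :
    HasBoundedResolvent T z ↔ ∃ R : E →L[ℂ] E, IsResolventAt T z R :=
  ⟨fun ⟨R, h_right, h_left⟩ ↦
    ⟨R, fun y ↦ (h_right y).choose, fun y ↦ (h_right y).choose_spec, h_left⟩,
  fun ⟨R, hR⟩ ↦ ⟨R, fun y ↦ ⟨hR.mem_domain y, hR.smul_sub_apply y⟩, hR.apply_smul_sub⟩⟩

theorem IsResolventAt.sub_inv_mem_pSpectrum {R : E →L[ℂ] E} {z s : ℂ} (hR : IsResolventAt T z R)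
    (hs : s ∈ spectrum ℂ R) (hs_ne : s ≠ 0) : z - s⁻¹ ∈ pSpectrum T := by
  intro h
  obtain ⟨S, hS⟩ := hasBoundedResolvent_iff_exists_isResolventAt.mp h
  have h_ne : z ≠ z - s⁻¹ := Ne.symm (sub_eq_self.not.mpr (inv_ne_zero hs_ne))
  apply hR.inv_sub_notMem_spectrum hS h_ne
  rwa [sub_sub_cancel, inv_inv]

theorem IsResolventAt.exists_mem_pSpectrum_abs_sub_eq [Nontrivial E] {R : E →L[ℂ] E} {a : ℝ}
    (hT : T.IsFormalAdjoint T) (hR : IsResolventAt T (a : ℂ) R) :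
    ∃ lam : ℝ, (lam : ℂ) ∈ pSpectrum T ∧ |lam - a| = ‖R‖⁻¹ := by
  obtain ⟨s, hs, hs_abs⟩ : ∃ s : ℝ, (s : ℂ) ∈ spectrum ℂ R ∧ |s| = ‖R‖ := by
    rcases norm_mem_or_neg_norm_mem_spectrum (hR.isSymmetric hT) with h | h
    · exact ⟨‖R‖, h, abs_norm R⟩
    · exact ⟨-‖R‖, by exact_mod_cast h, by rw [abs_neg, abs_norm]⟩
  have hs_ne : s ≠ 0 := by
    rw [← abs_ne_zero, hs_abs]
    exact norm_ne_zero_iff.mpr hR.ne_zero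
  refine ⟨a - s⁻¹, ?_, by rw [sub_sub_cancel_left, abs_neg, abs_inv, hs_abs]⟩
  exact_mod_cast hR.sub_inv_mem_pSpectrum hs (Complex.ofReal_ne_zero.mpr hs_ne)

theorem exists_mem_pSpectrum_abs_sub_le (hT : T.IsFormalAdjoint T) {a c : ℝ} {x : T.domain}
    (hx : (x : E) ≠ 0) (hxc : ‖T x - (a : ℂ) • (x : E)‖ ≤ c * ‖(x : E)‖) :
    ∃ lam : ℝ, (lam : ℂ) ∈ pSpectrum T ∧ |lam - a| ≤ c := by
  have hx_pos : 0 < ‖(x : E)‖ := norm_pos_iff.mpr hx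
  by_cases ha : (a : ℂ) ∈ pSpectrum T
  · refine ⟨a, ha, ?_⟩
    rw [sub_self, abs_zero]
    exact nonneg_of_mul_nonneg_left ((norm_nonneg _).trans hxc) hx_pos
  obtain ⟨R, hR⟩ := hasBoundedResolvent_iff_exists_isResolventAt.mp (not_not.mp ha)
  have : Nontrivial E := ⟨x, 0, hx⟩
  obtain ⟨lam, hlam, h_dist⟩ := hR.exists_mem_pSpectrum_abs_sub_eq hT
  refine ⟨lam, hlam, h_dist.trans_le ?_⟩
  have h_le : ‖(x : E)‖ ≤ ‖R‖ * c * ‖(x : E)‖ := calc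
    ‖(x : E)‖ = ‖R ((a : ℂ) • (x : E) - T x)‖ := by rw [hR.apply_smul_sub]
    _ ≤ ‖R‖ * ‖T x - (a : ℂ) • (x : E)‖ := by
      rw [norm_sub_rev]
      exact R.le_opNorm _
    _ ≤ ‖R‖ * (c * ‖(x : E)‖) := by gcongr
    _ = ‖R‖ * c * ‖(x : E)‖ := by ring
  rw [inv_le_iff_one_le_mul₀' (norm_pos_iff.mpr hR.ne_zero)]
  exact (le_mul_iff_one_le_left hx_pos).mp h_le

theorem shargorodsky_general (hT : T.IsFormalAdjoint T) {L : Submodule ℂ T.domain} {μ : ℂ}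
    (hμ : μ ∈ secondOrderSpectrum T L) :
    ∃ lam : ℝ, (lam : ℂ) ∈ pSpectrum T ∧ |lam - μ.re| ≤ |μ.im| := by
  obtain ⟨u, hu_ne, hu⟩ := hμ
  set x : T.domain := (u : T.domain)
  have hx_ne : (x : E) ≠ 0 := by simpa [x] using hu_ne
  have h_sq : ‖T x - (μ.re : ℂ) • (x : E)‖ ^ 2 = (μ.im * ‖(x : E)‖) ^ 2 := by
    have h := re_inner_sub_smul_sub_conj_smul (x : E) (T x) μ
    rw [hu u, map_zero] at h
    exact sub_eq_zero.mp h.symm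
  have h_norm : ‖T x - (μ.re : ℂ) • (x : E)‖ = |μ.im| * ‖(x : E)‖ := by
    rwa [sq_eq_sq_iff_abs_eq_abs, abs_norm, abs_mul, abs_norm] at h_sq
  exact exists_mem_pSpectrum_abs_sub_le hT hx_ne h_norm.le

end Spectrum

theorem isFormalAdjoint_self_of_isSelfAdjoint {𝕜 E : Type*} [RCLike 𝕜] [NormedAddCommGroup E]
    [InnerProductSpace 𝕜 E] [CompleteSpace E] {T : E →ₗ.[𝕜] E} (hT : IsSelfAdjoint T) :
    T.IsFormalAdjoint T := by
  have h := LinearPMap.adjoint_isFormalAdjoint hT.dense_domain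
  rwa [LinearPMap.isSelfAdjoint_def.mp hT] at h

/-- Shargorodsky: if `μ ∈ Spec₂(A, 𝓛)` then the interval
`[Re μ − |Im μ|, Re μ + |Im μ|]` intersects `Spec(A)`. -/
theorem shargorodsky
    [TopologicalSpace.SeparableSpace H]
    (T : H →ₗ.[ℂ] H) (hT : IsSelfAdjoint T)
    (L : Submodule ℂ T.domain) (hL : L ≠ ⊥) (hfd : FiniteDimensional ℂ L)
    (μ : ℂ) (hμ : μ ∈ secondOrderSpectrum T L) :
    ∃ lam : ℝ, (lam : ℂ) ∈ pSpectrum T ∧ |lam - μ.re| ≤ |μ.im| :=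
  shargorodsky_general (isFormalAdjoint_self_of_isSelfAdjoint hT) hμ
end

section
/- (Mapping lemma) Let A be a self-adjoint operator with domain D(A) in a separable complex Hilbert space H, let 𝓛 ⊆ D(A) be a finite-dimensional subspace, and let a ∈ ℝ \ Spec(A). Set B = (A − a)^{−1} (a bounded self-adjoint operator), 𝓖 = (A − a)𝓛, and for z ≠ a set w = (z − a)^{−1}. Then z, z̄ ∈ Spec₂(A, 𝓛) if and only if w, w̄ ∈ Spec₂(B, 𝓖). -/
open scoped InnerProductSpace

variable {H : Type*} [NormedAddCommGroup H] [InnerProductSpace ℂ H] [CompleteSpace H]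

/-- The second order spectrum of a bounded operator `B` relative to a subspace `G ⊆ H`. -/
def secondOrderSpectrumCLM (B : H →L[ℂ] H) (G : Submodule ℂ H) : Set ℂ :=
  {z : ℂ | ∃ u : G, u ≠ 0 ∧ ∀ v : G,
    ⟪B (u : H) - z • ((u : G) : H), B (v : H) - (starRingEnd ℂ z) • ((v : G) : H)⟫_ℂ = 0}

/-!
With `w = (z - a)⁻¹`, every `x ∈ D(T)` satisfies `x - w (T - a) x = -w (T - z) x`, and since `a` is
real the same holds for the conjugates `w̄` and `z̄`. As `B` undoes `T - a`, substituting
`(T - a) u` and `(T - a) v` for the vectors of `𝓖` multiplies the sesquilinear form defining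
`Spec₂(T, 𝓛)` by the nonzero factor `w̄²`.
-/

/-- The operator `T - c` on the domain of `T`, as an everywhere defined linear map from the
subspace `T.domain`; it is the family in which both second order spectra are expressed. -/
def subScalar {R E : Type*} [CommRing R] [AddCommGroup E] [Module R E] (T : E →ₗ.[R] E) (c : R) :
    T.domain →ₗ[R] E :=
  T.toFun - c • T.domain.subtype

theorem coe_sub_inv_smul_subScalar {K E : Type*} [Field K] [AddCommGroup E] [Module K E]
    (T : E →ₗ.[K] E) {a z : K} (hz : z ≠ a) (x : T.domain) :
    (x : E) - (z - a)⁻¹ • subScalar T a x = -(z - a)⁻¹ • subScalar T z x := by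
  have hza : z - a ≠ 0 := sub_ne_zero.mpr hz
  have hdiff : subScalar T a x = subScalar T z x + (z - a) • (x : E) := by
    simp only [subScalar, LinearMap.sub_apply, LinearMap.smul_apply, Submodule.subtype_apply]
    module
  rw [hdiff, smul_add, inv_smul_smul₀ hza]
  module

section InnerProduct

variable {E : Type*} [NormedAddCommGroup E]

theorem inner_coe_sub_inv_smul_subScalar_eq_zero_iff {𝕜 : Type*} [RCLike 𝕜]
    [InnerProductSpace 𝕜 E] (T : E →ₗ.[𝕜] E) {a z : 𝕜} (ha : starRingEnd 𝕜 a = a) (hz : z ≠ a)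
    (x y : T.domain) :
    ⟪(x : E) - (z - a)⁻¹ • subScalar T a x,
      (y : E) - starRingEnd 𝕜 (z - a)⁻¹ • subScalar T a y⟫_𝕜 = 0 ↔
      ⟪subScalar T z x, subScalar T (starRingEnd 𝕜 z) y⟫_𝕜 = 0 := by
  have hconj : starRingEnd 𝕜 (z - a)⁻¹ = (starRingEnd 𝕜 z - a)⁻¹ := by
    rw [map_inv₀, map_sub, ha]
  have hz_conj : starRingEnd 𝕜 z ≠ a :=
    ((starRingEnd 𝕜).injective.ne_iff' ha).mpr hz
  rw [hconj, coe_sub_inv_smul_subScalar T hz, coe_sub_inv_smul_subScalar T hz_conj,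
    inner_smul_left, inner_smul_right]
  simp [sub_ne_zero.mpr hz_conj, ha]

variable [InnerProductSpace ℂ E]

theorem mem_secondOrderSpectrum_iff {T : E →ₗ.[ℂ] E} {L : Submodule ℂ T.domain} {z : ℂ} :
    z ∈ secondOrderSpectrum T L ↔ ∃ u ∈ L, u ≠ 0 ∧ ∀ v ∈ L,
      ⟪subScalar T z u, subScalar T (starRingEnd ℂ z) v⟫_ℂ = 0 :=
  ⟨fun ⟨u, hu, h⟩ ↦ ⟨u, u.2, Subtype.coe_ne_coe.mpr hu, fun v hv ↦ h ⟨v, hv⟩⟩,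
    fun ⟨u, huL, hu, h⟩ ↦ ⟨⟨u, huL⟩, Subtype.coe_ne_coe.mp hu, fun v ↦ h v v.2⟩⟩

theorem mem_secondOrderSpectrumCLM_map_iff {V : Type*} [AddCommGroup V] [Module ℂ V]
    {B : E →L[ℂ] E} {S : V →ₗ[ℂ] E} (hS : Function.Injective S) {L : Submodule ℂ V} {w : ℂ} :
    w ∈ secondOrderSpectrumCLM B (L.map S) ↔ ∃ u ∈ L, u ≠ 0 ∧ ∀ v ∈ L,
      ⟪B (S u) - w • S u, B (S v) - starRingEnd ℂ w • S v⟫_ℂ = 0 := by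
  constructor
  · rintro ⟨⟨_, u, huL, rfl⟩, hu, h⟩
    have hu0 : u ≠ 0 := by
      rintro rfl
      exact hu (Subtype.ext (map_zero S))
    exact ⟨u, huL, hu0, fun v hvL ↦ h ⟨S v, Submodule.mem_map_of_mem hvL⟩⟩
  · rintro ⟨u, huL, hu, h⟩
    refine ⟨⟨S u, Submodule.mem_map_of_mem huL⟩, ?_, ?_⟩
    · exact Subtype.coe_ne_coe.mp ((map_ne_zero_iff S hS).mpr hu)
    · rintro ⟨_, v, hvL, rfl⟩
      exact h v hvL

theorem mapping_lemma_general (T : E →ₗ.[ℂ] E) (L : Submodule ℂ T.domain) (a : ℝ) (B : E →L[ℂ] E)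
    (hB : ∀ x : T.domain, B (subScalar T a x) = x) {z : ℂ} (hz : z ≠ a) :
    z ∈ secondOrderSpectrum T L ↔
      (z - a)⁻¹ ∈ secondOrderSpectrumCLM B (L.map (subScalar T a)) := by
  have hinj : Function.Injective (subScalar T a) := fun x y hxy ↦
    Subtype.ext (by rw [← hB x, hxy, hB y])
  simp only [mem_secondOrderSpectrum_iff, mem_secondOrderSpectrumCLM_map_iff hinj, hB,
    inner_coe_sub_inv_smul_subScalar_eq_zero_iff T (Complex.conj_ofReal a) hz]

end InnerProduct

/-- Mapping lemma: for `a ∈ ℝ \ Spec(A)`, `B = (A − a)⁻¹`,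
`𝓖 = (A − a)𝓛` and `w = (z − a)⁻¹` (for `z ≠ a`):
`z, z̄ ∈ Spec₂(A, 𝓛)` iff `w, w̄ ∈ Spec₂(B, 𝓖)`. -/
theorem mapping_lemma
    [TopologicalSpace.SeparableSpace H]
    (T : H →ₗ.[ℂ] H) (hT : IsSelfAdjoint T)
    (L : Submodule ℂ T.domain) (hfd : FiniteDimensional ℂ L)
    (a : ℝ) (B : H →L[ℂ] H)
    (hB1 : ∀ x : T.domain, B (T x - (a : ℂ) • (x : H)) = (x : H))
    (hB2 : ∀ y : H, ∃ h : B y ∈ T.domain, T ⟨B y, h⟩ - (a : ℂ) • B y = y)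
    (G : Submodule ℂ H)
    (hG : G = Submodule.map (T.toFun - (a : ℂ) • T.domain.subtype) L)
    (z : ℂ) (hz : z ≠ (a : ℂ)) :
    (z ∈ secondOrderSpectrum T L ∧ (starRingEnd ℂ z) ∈ secondOrderSpectrum T L) ↔
      ((z - a)⁻¹ ∈ secondOrderSpectrumCLM B G ∧
        (starRingEnd ℂ) ((z - a)⁻¹) ∈ secondOrderSpectrumCLM B G) := by
  rw [hG, map_inv₀, map_sub, Complex.conj_ofReal]
  exact and_congr (mapping_lemma_general T L a B hB1 hz) (mapping_lemma_general T L a B hB1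
    (((starRingEnd ℂ).injective.ne_iff' (Complex.conj_ofReal a)).mpr hz))
end

section
/- Let V : ℝ → ℝ be continuous, bounded below by b₀ > 0, with V(x) → ∞ as |x| → ∞ and |V(x)| ≤ k_b e^{b|x|} for every b > 0 and suitable k_b > 0. Let ψ_1, …, ψ_j be L²(ℝ)-orthonormal functions with −ψ_k'' + Vψ_k = λ_kψ_k and satisfying |ψ_k(x)|, |ψ_k'(x)|, |ψ_k''(x)| ≤ c e^{−a|x|} for all x (with c, a > 0). Let h_L : ℝ → [0,1] be the smooth cutoff equal to 1 on [−L, L], equal to 0 outside [−2L, 2L], and equal to exp(1 − 1/(1 − (x/L − 1)²)) on [L, 2L] and exp(1 − 1/(1 − (x/L + 1)²)) on [−2L, −L]. Set ψ_k^L = h_Lψ_k and U_j(L) = span{ψ_1^L, …, ψ_j^L}. Then there exist L_j > 0 and c_j > 0 such that for all L > L_j: (1) dim U_j(L) = j; and (2) for every v ∈ U_j(L) with ‖v‖_{L²} = 1 there exists φ ∈ span{ψ_1, …, ψ_j} with ‖φ‖_{L²} = 1 and ∫_ℝ (|v'(x) − φ'(x)|² + V(x)|v(x) − φ(x)|²)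 dx ≤ c_j e^{−2aL}. -/
open MeasureTheory

/-- The smooth cutoff `h_L`, equal to `1` on `[−L, L]` and `0` outside `[−2L, 2L]`. -/
noncomputable def hcut (L x : ℝ) : ℝ :=
  if x ≤ -(2 * L) then 0
  else if x ≤ -L then Real.exp (1 - 1 / (1 - (x / L + 1) ^ 2))
  else if x ≤ L then 1
  else if x ≤ 2 * L then Real.exp (1 - 1 / (1 - (x / L - 1) ^ 2))
  else 0

/-!
On a combination `w = ∑ αₖ ψₖ` both `|w|²` and the energy density `|w'|² + V|w|²` are
`O(‖α‖² e^{-2a|x|})`: the eigenvalue equation trades the growing factor `V ψₖ` for `ψₖ''` and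
`λₖ ψₖ`. Since `‖w‖ = ‖α‖` and the mass of `w` beyond `L` is `O(‖α‖² e^{-2aL})`, cutting off almost
preserves the norm, so the cut-off functions stay independent.

If `v = h_L w` is normalized, then `0 ≤ ‖w‖² - 1 = O(e^{-2aL})`, and `φ = r w` with `r = 1 / ‖w‖`
works: `v - φ = (h_L - r) w`, where `h_L - r` is the constant `1 - r`, with
`(1 - r)² ≤ ‖w‖² - 1`, on `[-L, L]`, and has bounded values and slope on the exponentially small
tail.
-/

open Filter
open scoped ComplexConjugate

section ExpDecay

variable {b L : ℝ}

lemma integral_exp_mul_abs (hb : b < 0) : ∫ x : ℝ, Real.exp (b * |x|) = -2 / b := by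
  rw [integral_comp_abs (f := fun y => Real.exp (b * y)), integral_exp_mul_Ioi hb]
  simp only [mul_zero, Real.exp_zero]
  ring

lemma integrable_exp_mul_abs (hb : b < 0) : Integrable fun x : ℝ => Real.exp (b * |x|) :=
  .of_integral_ne_zero <| by
    rw [integral_exp_mul_abs hb]
    exact div_ne_zero (by norm_num) hb.ne

lemma measurableSet_le_abs (L : ℝ) : MeasurableSet {x : ℝ | L ≤ |x|} :=
  measurableSet_le measurable_const measurable_abs

lemma setIntegral_exp_mul_abs (hb : b < 0) (hL : 0 < L) :
    ∫ x in {x : ℝ | L ≤ |x|}, Real.exp (b * |x|) = -2 / b * Real.exp (b * L) := by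
  have hcomp (x : ℝ) : {x : ℝ | L ≤ |x|}.indicator (fun x => Real.exp (b * |x|)) x =
      (Set.Ici L).indicator (fun y => Real.exp (b * y)) |x| := rfl
  rw [← integral_indicator (measurableSet_le_abs L)]
  simp only [hcomp]
  rw [integral_comp_abs, setIntegral_indicator measurableSet_Ici,
    Set.inter_eq_right.2 (Set.Ici_subset_Ioi.2 hL), integral_Ici_eq_integral_Ioi,
    integral_exp_mul_Ioi hb]
  ring

end ExpDecay

section L2Orthonormal

variable {X ι 𝕜 : Type*} [MeasurableSpace X] [DecidableEq ι] [RCLike 𝕜]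

/-- Orthonormality in `L²(μ)` of a family of functions, rather than of almost-everywhere classes. -/
def L2Orthonormal (μ : Measure X) (ψ : ι → X → 𝕜) : Prop :=
  ∀ k l, ∫ x, conj (ψ k x) * ψ l x ∂μ = if k = l then 1 else 0

namespace L2Orthonormal

variable {μ : Measure X} {ψ : ι → X → 𝕜}

lemma memLp (hψ : L2Orthonormal μ ψ) {k : ι} (hk : AEStronglyMeasurable (ψ k) μ) :
    MemLp (ψ k) 2 μ := by
  rw [memLp_two_iff_integrable_sq_norm hk]
  have hsq : Integrable (fun x => conj (ψ k x) * ψ k x) μ :=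
    .of_integral_ne_zero <| by simp [hψ k k]
  simpa only [RCLike.conj_mul, ← RCLike.ofReal_pow, RCLike.ofReal_re] using hsq.re

variable [Fintype ι]

lemma memLp_sum_smul (hψ : L2Orthonormal μ ψ) (hmeas : ∀ k, AEStronglyMeasurable (ψ k) μ)
    (α : ι → 𝕜) : MemLp (∑ k, α k • ψ k) 2 μ :=
  memLp_finsetSum' _ fun k _ => (hψ.memLp (hmeas k)).const_smul (α k)

lemma integral_norm_sq_sum_smul (hψ : L2Orthonormal μ ψ)
    (hmeas : ∀ k, AEStronglyMeasurable (ψ k) μ) (α : ι → 𝕜) :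
    ∫ x, ‖(∑ k, α k • ψ k) x‖ ^ 2 ∂μ = ∑ k, ‖α k‖ ^ 2 := by
  have hint (k l : ι) : Integrable (fun x => conj (α k) * α l * (conj (ψ k x) * ψ l x)) μ :=
    ((hψ.memLp (hmeas k)).star.integrable_mul (hψ.memLp (hmeas l))).const_mul _
  have hexpand (x : X) : ((‖(∑ k, α k • ψ k) x‖ ^ 2 : ℝ) : 𝕜) =
      ∑ k, ∑ l, conj (α k) * α l * (conj (ψ k x) * ψ l x) := by
    simp only [Finset.sum_apply, Pi.smul_apply, smul_eq_mul, RCLike.ofReal_pow,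
      ← RCLike.conj_mul, map_sum, Finset.sum_mul_sum, map_mul]
    exact Finset.sum_congr rfl fun k _ => Finset.sum_congr rfl fun l _ => by ring
  apply RCLike.ofReal_injective (K := 𝕜)
  calc ((∫ x, ‖(∑ k, α k • ψ k) x‖ ^ 2 ∂μ : ℝ) : 𝕜)
      = ∫ x, ∑ k, ∑ l, conj (α k) * α l * (conj (ψ k x) * ψ l x) ∂μ := by
        simp only [← integral_ofReal, hexpand]
    _ = ∑ k, ∑ l, conj (α k) * α l * ∫ x, conj (ψ k x) * ψ l x ∂μ := by
        rw [integral_finsetSum _ fun k _ => integrable_finsetSum _ fun l _ => hint k l]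
        simp only [integral_finsetSum _ fun l _ => hint _ l, integral_const_mul]
    _ = ((∑ k, ‖α k‖ ^ 2 : ℝ) : 𝕜) := by
        simp [hψ _ _, RCLike.conj_mul]

end L2Orthonormal

end L2Orthonormal

section EnergyDensity

variable {E ι 𝕜 : Type*} [NormedAddCommGroup E] [NormedSpace ℝ E]

/-- The integrand `|u'|² + V|u|²` of the quadratic form `𝔞¹(u, u)`. -/
noncomputable def energyDensity (V : ℝ → ℝ) (u : ℝ → E) (x : ℝ) : ℝ :=
  ‖deriv u x‖ ^ 2 + V x * ‖u x‖ ^ 2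

lemma energyDensity_nonneg {V : ℝ → ℝ} {x : ℝ} (hV : 0 ≤ V x) (u : ℝ → E) :
    0 ≤ energyDensity V u x := by
  unfold energyDensity
  positivity

lemma energyDensity_smul_le {V h : ℝ → ℝ} {w : ℝ → E} {x : ℝ} (hV : 0 ≤ V x)
    (hh : DifferentiableAt ℝ h x) (hw : DifferentiableAt ℝ w x) :
    energyDensity V (h • w) x ≤
      2 * deriv h x ^ 2 * ‖w x‖ ^ 2 + 2 * h x ^ 2 * energyDensity V w x := by
  have hderiv : ‖deriv (h • w) x‖ ≤ |h x| * ‖deriv w x‖ + |deriv h x| * ‖w x‖ := by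
    rw [deriv_smul hh hw]
    simpa only [norm_smul, Real.norm_eq_abs] using norm_add_le (h x • deriv w x) (deriv h x • w x)
  have hderiv_sq :
      ‖deriv (h • w) x‖ ^ 2 ≤ 2 * (h x ^ 2 * ‖deriv w x‖ ^ 2 + deriv h x ^ 2 * ‖w x‖ ^ 2) :=
    calc ‖deriv (h • w) x‖ ^ 2 ≤ (|h x| * ‖deriv w x‖ + |deriv h x| * ‖w x‖) ^ 2 := by gcongr
      _ ≤ 2 * ((|h x| * ‖deriv w x‖) ^ 2 + (|deriv h x| * ‖w x‖) ^ 2) := add_sq_le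
      _ = _ := by simp only [mul_pow, sq_abs]
  have hpot : 0 ≤ h x ^ 2 * (V x * ‖w x‖ ^ 2) := by positivity
  simp only [energyDensity, Pi.smul_apply', norm_smul, Real.norm_eq_abs, mul_pow, sq_abs]
    at hderiv_sq ⊢
  linarith

lemma aestronglyMeasurable_energyDensity [CompleteSpace E] {V : ℝ → ℝ} {u : ℝ → E}
    (hV : Measurable V) (hu : AEStronglyMeasurable u) :
    AEStronglyMeasurable (energyDensity V u) :=
  ((aestronglyMeasurable_deriv u _).norm.pow 2).add
    (hV.aestronglyMeasurable.mul (hu.norm.pow 2))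

lemma energyDensity_le_of_eigenfunction {V : ℝ → ℝ} {u : ℝ → E} {lam x B : ℝ} (hV : 0 ≤ V x)
    (heq : -deriv (deriv u) x + V x • u x = lam • u x)
    (hu : ‖u x‖ ≤ B) (hu' : ‖deriv u x‖ ≤ B) (hu'' : ‖deriv (deriv u) x‖ ≤ B) :
    energyDensity V u x ≤ (2 + |lam|) * B ^ 2 := by
  have hVu : V x * ‖u x‖ ≤ (1 + |lam|) * B :=
    calc V x * ‖u x‖ = ‖V x • u x‖ := by rw [norm_smul, Real.norm_of_nonneg hV]
      _ = ‖deriv (deriv u) x + lam • u x‖ := by rw [← heq, add_neg_cancel_left]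
      _ ≤ ‖deriv (deriv u) x‖ + |lam| * ‖u x‖ := by
        simpa only [norm_smul, Real.norm_eq_abs] using norm_add_le (deriv (deriv u) x) (lam • u x)
      _ ≤ B + |lam| * B := by gcongr
      _ = _ := by ring
  calc energyDensity V u x = ‖deriv u x‖ ^ 2 + V x * ‖u x‖ * ‖u x‖ := by
        rw [energyDensity, mul_assoc, ← sq]
    _ ≤ B ^ 2 + (1 + |lam|) * B * B := by
        gcongr
        exact (by positivity : 0 ≤ V x * ‖u x‖).trans hVu
    _ = _ := by ring

variable [Fintype ι] [RCLike 𝕜]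

lemma norm_sum_mul_sq_le (α f : ι → 𝕜) :
    ‖∑ k, α k * f k‖ ^ 2 ≤ (∑ k, ‖α k‖ ^ 2) * ∑ k, ‖f k‖ ^ 2 :=
  calc ‖∑ k, α k * f k‖ ^ 2 ≤ (∑ k, ‖α k‖ * ‖f k‖) ^ 2 := by
        gcongr
        simpa only [norm_mul] using norm_sum_le Finset.univ fun k => α k * f k
    _ ≤ _ := Finset.sum_mul_sq_le_sq_mul_sq _ _ _

lemma energyDensity_sum_smul_le {V : ℝ → ℝ} {ψ : ι → ℝ → 𝕜} {x : ℝ} (hV : 0 ≤ V x)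
    (hψ : ∀ k, DifferentiableAt ℝ (ψ k) x) (α : ι → 𝕜) :
    energyDensity V (∑ k, α k • ψ k) x ≤ (∑ k, ‖α k‖ ^ 2) * ∑ k, energyDensity V (ψ k) x := by
  have hderiv : deriv (∑ k, α k • ψ k) x = ∑ k, α k * deriv (ψ k) x := by
    rw [deriv_sum fun k _ => (hψ k).const_smul (α k)]
    simp only [deriv_const_smul_field, smul_eq_mul]
  simp only [energyDensity, hderiv, Finset.sum_apply, Pi.smul_apply, smul_eq_mul]
  calc _ ≤ (∑ k, ‖α k‖ ^ 2) * (∑ k, ‖deriv (ψ k) x‖ ^ 2) +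
        V x * ((∑ k, ‖α k‖ ^ 2) * ∑ k, ‖ψ k x‖ ^ 2) := by
        gcongr <;> apply norm_sum_mul_sq_le
    _ = _ := by
        rw [Finset.sum_add_distrib, ← Finset.mul_sum]
        ring

end EnergyDensity

section Cutoff

lemma sq_one_sub_inv_sqrt_le {S : ℝ} (hS : 1 ≤ S) : (1 - (√S)⁻¹) ^ 2 ≤ S - 1 := by
  have hsqrt : 1 ≤ √S := Real.one_le_sqrt.2 hS
  have hinv_nonneg : 0 ≤ (√S)⁻¹ := inv_nonneg.2 (Real.sqrt_nonneg S)
  have hinv_le : (√S)⁻¹ ≤ 1 := inv_le_one_of_one_le₀ hsqrt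
  calc (1 - (√S)⁻¹) ^ 2 ≤ 1 - (√S)⁻¹ := by nlinarith
    _ ≤ √S * (1 - (√S)⁻¹) := le_mul_of_one_le_left (sub_nonneg.2 hinv_le) hsqrt
    _ = √S - 1 := by rw [mul_sub, mul_inv_cancel₀ (by positivity), mul_one]
    _ ≤ S - 1 := by
      gcongr
      exact (Real.sqrt_le_left (by positivity)).2 (le_self_pow₀ hS two_ne_zero)

/-- `h` is a cutoff at scale `L` with slope at most `M`. The bounds are only required almost
everywhere, and `deriv h` is the pointwise derivative: `hcut L` has a junk value at `2 * L`. -/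
structure IsCutoff (h : ℝ → ℝ) (L M : ℝ) : Prop where
  measurable : Measurable h
  eq_one : ∀ x, |x| < L → h x = 1
  ae_mem_Icc : ∀ᵐ x, h x ∈ Set.Icc 0 1
  ae_differentiableAt : ∀ᵐ x, DifferentiableAt ℝ h x
  ae_abs_deriv_le : ∀ᵐ x, |deriv h x| ≤ M

namespace IsCutoff

variable {h V : ℝ → ℝ} {a r K L M M' S : ℝ}

lemma mono (hh : IsCutoff h L M) (hM : M ≤ M') : IsCutoff h L M' :=
  { hh with ae_abs_deriv_le := hh.ae_abs_deriv_le.mono fun _ hx => hx.trans hM }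

lemma deriv_eq_zero (hh : IsCutoff h L M) {x : ℝ} (hx : |x| < L) : deriv h x = 0 := by
  have hconst : h =ᶠ[nhds x] fun _ => 1 :=
    (continuousAt_id.abs.eventually_lt_const hx).mono hh.eq_one
  rw [hconst.deriv_eq, deriv_const]

variable {E : Type*} [NormedAddCommGroup E] [NormedSpace ℝ E] {w : ℝ → E}

lemma ae_norm_smul_sq_le (hh : IsCutoff h L M) (w : ℝ → E) :
    ∀ᵐ x, ‖(h • w) x‖ ^ 2 ≤ ‖w x‖ ^ 2 := by
  filter_upwards [hh.ae_mem_Icc] with x hx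
  rw [Pi.smul_apply', norm_smul, Real.norm_of_nonneg hx.1]
  exact pow_le_pow_left₀ (mul_nonneg hx.1 (norm_nonneg _))
    (mul_le_of_le_one_left (norm_nonneg _) hx.2) 2

lemma integral_norm_smul_sq_le (hh : IsCutoff h L M) (hw : MemLp w 2) :
    ∫ x, ‖(h • w) x‖ ^ 2 ≤ ∫ x, ‖w x‖ ^ 2 :=
  integral_mono_of_nonneg (.of_forall fun _ => sq_nonneg _)
    (hw.integrable_norm_pow two_ne_zero) (hh.ae_norm_smul_sq_le w)

lemma integral_norm_sq_le_add_tail (hh : IsCutoff h L M) (hw : MemLp w 2) :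
    ∫ x, ‖w x‖ ^ 2 ≤ (∫ x, ‖(h • w) x‖ ^ 2) + ∫ x in {x | L ≤ |x|}, ‖w x‖ ^ 2 := by
  have hw_int : Integrable fun x => ‖w x‖ ^ 2 := hw.integrable_norm_pow two_ne_zero
  have hhw_int : Integrable fun x => ‖(h • w) x‖ ^ 2 :=
    hw_int.mono' ((hh.measurable.aestronglyMeasurable.smul hw.1).norm.pow 2) <| by
      filter_upwards [hh.ae_norm_smul_sq_le w] with x hx
      rwa [Real.norm_of_nonneg (sq_nonneg _)]
  rw [← integral_indicator (measurableSet_le_abs L),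
    ← integral_add hhw_int (hw_int.indicator (measurableSet_le_abs L))]
  refine integral_mono hw_int (hhw_int.add (hw_int.indicator (measurableSet_le_abs L))) fun x => ?_
  rcases lt_or_ge |x| L with hx | hx
  · simp [hh.eq_one x hx, hx.not_ge]
  · simp [hx]

/-- The difference is `(h - r) • w`, whose energy splits into that of the constant factor `1 - r`
and a remainder supported where `h` is not locally constant. -/
lemma ae_energyDensity_smul_sub_smul_le (hh : IsCutoff h L M) (hV : ∀ x, 0 ≤ V x)
    (hw : Differentiable ℝ w) (hr : r ∈ Set.Icc (0 : ℝ) 1) :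
    ∀ᵐ x, energyDensity V (h • w - r • w) x ≤ 2 * (1 - r) ^ 2 * energyDensity V w x +
      {x | L ≤ |x|}.indicator
        (fun x => 2 * M ^ 2 * ‖w x‖ ^ 2 + 2 * energyDensity V w x) x := by
  have hfactor : h • w - r • w = (fun x => h x - r) • w := by
    ext x
    simp [sub_smul]
  filter_upwards [hh.ae_mem_Icc, hh.ae_differentiableAt, hh.ae_abs_deriv_le] with x hx hdiff hderiv
  have hE := energyDensity_nonneg (hV x) w
  have hleibniz := energyDensity_smul_le (hV x) (hdiff.sub_const r) (hw x)
  rw [hfactor]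
  rw [deriv_sub_const_fun] at hleibniz
  rcases lt_or_ge |x| L with hxL | hxL
  · simpa [hh.eq_one x hxL, hh.deriv_eq_zero hxL, hxL.not_ge] using hleibniz
  · have hsub : (h x - r) ^ 2 ≤ 1 :=
      (sq_le_one_iff_abs_le_one _).2 (abs_le.2 ⟨by linarith [hx.1, hr.2], by linarith [hx.2, hr.1]⟩)
    have hslope : deriv h x ^ 2 ≤ M ^ 2 := sq_le_sq.2 (hderiv.trans (le_abs_self M))
    rw [Set.indicator_of_mem (by exact hxL)]
    calc _ ≤ 2 * deriv h x ^ 2 * ‖w x‖ ^ 2 + 2 * (h x - r) ^ 2 * energyDensity V w x := hleibniz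
      _ ≤ 2 * M ^ 2 * ‖w x‖ ^ 2 + 2 * 1 * energyDensity V w x := by gcongr
      _ ≤ _ := by
        have : 0 ≤ 2 * (1 - r) ^ 2 * energyDensity V w x := by positivity
        linarith

lemma ae_energyDensity_smul_sub_smul_le_exp (hh : IsCutoff h L M) (hV : ∀ x, 0 ≤ V x)
    (hw : Differentiable ℝ w) (hr : r ∈ Set.Icc (0 : ℝ) 1)
    (hwK : ∀ x, ‖w x‖ ^ 2 ≤ K * Real.exp (-2 * a * |x|))
    (hEK : ∀ x, energyDensity V w x ≤ K * Real.exp (-2 * a * |x|)) :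
    ∀ᵐ x, energyDensity V (h • w - r • w) x ≤
      2 * K * (1 - r) ^ 2 * Real.exp (-2 * a * |x|) +
        {x | L ≤ |x|}.indicator
          (fun x => 2 * K * (M ^ 2 + 1) * Real.exp (-2 * a * |x|)) x := by
  filter_upwards [hh.ae_energyDensity_smul_sub_smul_le hV hw hr] with x hx
  refine hx.trans (add_le_add ?_ (Set.indicator_le_indicator ?_))
  · calc 2 * (1 - r) ^ 2 * energyDensity V w x
        ≤ 2 * (1 - r) ^ 2 * (K * Real.exp (-2 * a * |x|)) := by gcongr; exact hEK x
      _ = _ := by ring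
  · calc 2 * M ^ 2 * ‖w x‖ ^ 2 + 2 * energyDensity V w x
        ≤ 2 * M ^ 2 * (K * Real.exp (-2 * a * |x|)) + 2 * (K * Real.exp (-2 * a * |x|)) := by
          gcongr
          exacts [hwK x, hEK x]
      _ = _ := by ring

theorem energy_smul_sub_smul_le [CompleteSpace E] (hh : IsCutoff h L M) (hL : 0 < L) (ha : 0 < a)
    (hV : ∀ x, 0 ≤ V x) (hVm : Measurable V) (hw : Differentiable ℝ w)
    (hr : r ∈ Set.Icc (0 : ℝ) 1)
    (hwK : ∀ x, ‖w x‖ ^ 2 ≤ K * Real.exp (-2 * a * |x|))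
    (hEK : ∀ x, energyDensity V w x ≤ K * Real.exp (-2 * a * |x|)) :
    Integrable (energyDensity V (h • w - r • w)) ∧
      ∫ x, energyDensity V (h • w - r • w) x ≤
        2 * K / a * ((1 - r) ^ 2 + (M ^ 2 + 1) * Real.exp (-2 * a * L)) := by
  have hb : -2 * a < 0 := by linarith
  have hbound := hh.ae_energyDensity_smul_sub_smul_le_exp hV hw hr hwK hEK
  have hmain_int := (integrable_exp_mul_abs hb).const_mul (2 * K * (1 - r) ^ 2)
  have htail_int := ((integrable_exp_mul_abs hb).const_mul
    (2 * K * (M ^ 2 + 1))).indicator (measurableSet_le_abs L)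
  have hw_meas : AEStronglyMeasurable w := hw.continuous.aestronglyMeasurable
  constructor
  · refine (hmain_int.add htail_int).mono' (aestronglyMeasurable_energyDensity hVm
      ((hh.measurable.aestronglyMeasurable.smul hw_meas).sub (hw_meas.const_smul r))) ?_
    filter_upwards [hbound] with x hx
    rwa [Real.norm_of_nonneg (energyDensity_nonneg (hV x) _)]
  · calc ∫ x, energyDensity V (h • w - r • w) x
        ≤ _ := integral_mono_of_nonneg (.of_forall fun x => energyDensity_nonneg (hV x) _)
          (hmain_int.add htail_int) hbound
      _ = 2 * K * (1 - r) ^ 2 * (-2 / (-2 * a)) +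
          2 * K * (M ^ 2 + 1) * (-2 / (-2 * a) * Real.exp (-2 * a * L)) := by
        rw [integral_add' hmain_int htail_int, integral_indicator (measurableSet_le_abs L),
          integral_const_mul, integral_const_mul, integral_exp_mul_abs hb,
          setIntegral_exp_mul_abs hb hL]
      _ = _ := by
        field_simp

lemma integral_norm_sq_le_add_exp (hh : IsCutoff h L M) (hL : 0 < L) (ha : 0 < a)
    (hw : MemLp w 2) (hwK : ∀ x, ‖w x‖ ^ 2 ≤ K * Real.exp (-2 * a * |x|)) :
    ∫ x, ‖w x‖ ^ 2 ≤ (∫ x, ‖(h • w) x‖ ^ 2) + K / a * Real.exp (-2 * a * L) := by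
  have hb : -2 * a < 0 := by linarith
  refine (hh.integral_norm_sq_le_add_tail hw).trans (add_le_add_right ?_ _)
  calc ∫ x in {x | L ≤ |x|}, ‖w x‖ ^ 2
      ≤ ∫ x in {x | L ≤ |x|}, K * Real.exp (-2 * a * |x|) :=
        integral_mono_of_nonneg (.of_forall fun _ => sq_nonneg _)
          ((integrable_exp_mul_abs hb).const_mul K).restrict (.of_forall hwK)
    _ = _ := by
        rw [integral_const_mul, setIntegral_exp_mul_abs hb hL]
        field_simp

theorem exists_normalized_smul_energy_sub_le [CompleteSpace E] (hh : IsCutoff h L M) (hL : 0 < L)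
    (ha : 0 < a) (hV : ∀ x, 0 ≤ V x) (hVm : Measurable V) (hw : Differentiable ℝ w)
    (hw₂ : MemLp w 2) (hS : ∫ x, ‖w x‖ ^ 2 = S)
    (hwK : ∀ x, ‖w x‖ ^ 2 ≤ S * K * Real.exp (-2 * a * |x|))
    (hEK : ∀ x, energyDensity V w x ≤ S * K * Real.exp (-2 * a * |x|))
    (hsmall : K / a * Real.exp (-2 * a * L) ≤ 1 / 2) (hv : ∫ x, ‖(h • w) x‖ ^ 2 = 1) :
    ∃ r : ℝ, ∫ x, ‖(r • w) x‖ ^ 2 = 1 ∧ Integrable (energyDensity V (h • w - r • w)) ∧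
      ∫ x, energyDensity V (h • w - r • w) x ≤
        4 * K / a * (2 * K / a + M ^ 2 + 1) * Real.exp (-2 * a * L) := by
  have hS_ge : 1 ≤ S := by simpa only [hS, hv] using hh.integral_norm_smul_sq_le hw₂
  have hK : 0 ≤ K := by
    have h₀ : 0 ≤ S * K := by simpa using (sq_nonneg ‖w 0‖).trans (hwK 0)
    exact nonneg_of_mul_nonneg_right h₀ (by linarith)
  have hmass : S ≤ 1 + S * (K / a * Real.exp (-2 * a * L)) := by
    simpa only [hS, hv, mul_div_assoc, mul_assoc] using
      hh.integral_norm_sq_le_add_exp hL ha hw₂ hwK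
  have hS_le : S ≤ 2 := by nlinarith
  have hr : (√S)⁻¹ ∈ Set.Icc (0 : ℝ) 1 :=
    ⟨by positivity, inv_le_one_of_one_le₀ (Real.one_le_sqrt.2 hS_ge)⟩
  have hr_sq : (1 - (√S)⁻¹) ^ 2 ≤ 2 * (K / a * Real.exp (-2 * a * L)) :=
    calc (1 - (√S)⁻¹) ^ 2 ≤ S - 1 := sq_one_sub_inv_sqrt_le hS_ge
      _ ≤ S * (K / a * Real.exp (-2 * a * L)) := by linarith
      _ ≤ _ := by gcongr
  obtain ⟨hint, henergy⟩ := hh.energy_smul_sub_smul_le hL ha hV hVm hw hr hwK hEK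
  refine ⟨(√S)⁻¹, ?_, hint, henergy.trans ?_⟩
  · simp only [Pi.smul_apply, norm_smul, Real.norm_of_nonneg hr.1, mul_pow, integral_const_mul, hS]
    rw [inv_pow, Real.sq_sqrt (by linarith), inv_mul_cancel₀ (by linarith)]
  · calc _ ≤ 2 * (2 * K) / a * (2 * (K / a * Real.exp (-2 * a * L)) +
          (M ^ 2 + 1) * Real.exp (-2 * a * L)) := by gcongr
      _ = _ := by ring

end IsCutoff

end Cutoff

section StandardCutoff

variable {L t x : ℝ}

/-- The profile `exp (1 - 1 / (1 - t²))` of the transition of `hcut` from `1` at `t = 0` to `0` at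
`t = 1`. -/
noncomputable def bumpProfile (t : ℝ) : ℝ := Real.exp (1 - 1 / (1 - t ^ 2))

lemma bumpProfile_le_one (ht : t ^ 2 < 1) : bumpProfile t ≤ 1 := by
  rw [bumpProfile, Real.exp_le_one_iff, sub_nonpos, one_le_div (sub_pos.2 ht)]
  linarith [sq_nonneg t]

lemma hasDerivAt_bumpProfile (ht : t ^ 2 < 1) :
    HasDerivAt bumpProfile (-(2 * t) * ((1 / (1 - t ^ 2)) ^ 2 * bumpProfile t)) t := by
  have hinner : HasDerivAt (fun t : ℝ => 1 - t ^ 2) (-(2 * t)) t := by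
    simpa using (hasDerivAt_pow 2 t).const_sub 1
  have hpos : 1 - t ^ 2 ≠ 0 := (sub_pos.2 ht).ne'
  convert! ((hinner.fun_inv hpos).const_sub 1).exp using 1
  · simp [bumpProfile, funext_iff]
  · simp only [bumpProfile, one_div]
    field_simp

lemma sq_mul_exp_one_sub_le {s : ℝ} (hs : 1 ≤ s) : s ^ 2 * Real.exp (1 - s) ≤ 2 := by
  have hquad := Real.quadratic_le_exp_of_nonneg (sub_nonneg.2 hs)
  rw [← neg_sub s 1, Real.exp_neg, ← div_eq_mul_inv, div_le_iff₀ (Real.exp_pos _)]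
  nlinarith

lemma abs_deriv_bumpProfile_le (ht : t ^ 2 < 1) : |deriv bumpProfile t| ≤ 4 := by
  have hs : 1 ≤ 1 / (1 - t ^ 2) := by
    rw [one_le_div (sub_pos.2 ht)]
    linarith [sq_nonneg t]
  have hnonneg : 0 ≤ (1 / (1 - t ^ 2)) ^ 2 * bumpProfile t :=
    mul_nonneg (sq_nonneg _) (Real.exp_pos _).le
  have ht' : |t| ≤ 1 := (sq_le_one_iff_abs_le_one t).1 ht.le
  rw [(hasDerivAt_bumpProfile ht).deriv, abs_mul, abs_of_nonneg hnonneg, abs_neg, abs_mul, abs_two]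
  calc 2 * |t| * ((1 / (1 - t ^ 2)) ^ 2 * bumpProfile t) ≤ 2 * 1 * 2 := by
        gcongr
        exact sq_mul_exp_one_sub_le hs
    _ = 4 := by norm_num

lemma measurable_hcut (L : ℝ) : Measurable (hcut L) := by
  unfold hcut
  refine .ite measurableSet_Iic measurable_const <| .ite measurableSet_Iic (by fun_prop) <|
    .ite measurableSet_Iic measurable_const <| .ite measurableSet_Iic (by fun_prop) measurable_const

lemma hcut_of_abs_le (hL : 0 < L) (hx : |x| ≤ L) : hcut L x = 1 := by
  obtain ⟨hlo, hhi⟩ := abs_le.1 hx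
  rcases hlo.eq_or_lt with rfl | hlo
  · rw [hcut, if_neg (by linarith), if_pos le_rfl, neg_div, div_self hL.ne']
    norm_num
  · rw [hcut, if_neg (by linarith), if_neg (by linarith), if_pos hhi]

lemma hcut_of_lt_abs_of_abs_lt (hL : 0 < L) (hlo : L < |x|) (hhi : |x| < 2 * L) :
    hcut L x = bumpProfile (|x| / L - 1) := by
  obtain ⟨hxlo, hxhi⟩ := abs_lt.1 hhi
  rcases lt_abs.1 hlo with hx | hx
  · rw [hcut, if_neg (by linarith), if_neg (by linarith), if_neg (by linarith), if_pos hxhi.le,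
      abs_of_pos (hL.trans hx), bumpProfile]
  · rw [hcut, if_neg (by linarith), if_pos (by linarith), abs_of_neg (by linarith), bumpProfile]
    congr 4
    ring

lemma hcut_of_two_mul_lt_abs (hL : 0 < L) (hx : 2 * L < |x|) : hcut L x = 0 := by
  rcases lt_abs.1 hx with hx | hx
  · rw [hcut, if_neg (by linarith), if_neg (by linarith), if_neg (by linarith),
      if_neg (by linarith)]
  · rw [hcut, if_pos (by linarith)]

lemma ae_abs_ne (c : ℝ) : ∀ᵐ x : ℝ, |x| ≠ c := by
  filter_upwards [Measure.ae_ne volume c, Measure.ae_ne volume (-c)] with x hpos hneg hx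
  rcases eq_or_eq_neg_of_abs_eq hx with h | h
  exacts [hpos h, hneg h]

lemma sq_div_sub_one_lt_one {y : ℝ} (hL : 0 < L) (hlo : L < y) (hhi : y < 2 * L) :
    (y / L - 1) ^ 2 < 1 := by
  have h₁ : 1 < y / L := (one_lt_div hL).2 hlo
  have h₂ : y / L < 2 := (div_lt_iff₀ hL).2 hhi
  exact (sq_lt_one_iff_abs_lt_one _).2 (abs_lt.2 ⟨by linarith, by linarith⟩)

-- At `x = 2 * L` the convention `1 / 0 = 0` gives `hcut L x = exp 1`.
lemma hcut_mem_Icc (hL : 0 < L) (hx : |x| ≠ 2 * L) : hcut L x ∈ Set.Icc 0 1 := by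
  rcases le_or_gt |x| L with hlo | hlo
  · simp [hcut_of_abs_le hL hlo]
  rcases hx.lt_or_gt with hhi | hhi
  · rw [hcut_of_lt_abs_of_abs_lt hL hlo hhi]
    exact ⟨(Real.exp_pos _).le, bumpProfile_le_one (sq_div_sub_one_lt_one hL hlo hhi)⟩
  · simp [hcut_of_two_mul_lt_abs hL hhi]

lemma exists_hasDerivAt_hcut_of_lt_abs_of_abs_lt (hL : 0 < L) (hlo : L < |x|)
    (hhi : |x| < 2 * L) : ∃ d, HasDerivAt (hcut L) d x ∧ |d| ≤ 4 / L := by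
  have hsq := sq_div_sub_one_lt_one hL hlo hhi
  have hx0 : x ≠ 0 := abs_pos.1 (hL.trans hlo)
  have hinner : HasDerivAt (fun y : ℝ => |y| / L - 1) (SignType.sign x / L) x :=
    ((hasDerivAt_abs hx0).div_const L).sub_const 1
  have hcomp := (hasDerivAt_bumpProfile hsq).differentiableAt.hasDerivAt.comp x hinner
  have heq : hcut L =ᶠ[nhds x] fun y => bumpProfile (|y| / L - 1) := by
    filter_upwards [continuousAt_id.abs.eventually_const_lt hlo,
      continuousAt_id.abs.eventually_lt_const hhi] with y using hcut_of_lt_abs_of_abs_lt hL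
  refine ⟨_, hcomp.congr_of_eventuallyEq heq, ?_⟩
  have hsign : |((SignType.sign x : SignType) : ℝ)| = 1 := by
    rcases hx0.lt_or_gt with hx | hx <;> simp [hx]
  rw [abs_mul, abs_div, hsign, abs_of_pos hL, mul_one_div]
  gcongr
  exact abs_deriv_bumpProfile_le hsq

lemma exists_hasDerivAt_hcut (hL : 0 < L) (h₁ : |x| ≠ L) (h₂ : |x| ≠ 2 * L) :
    ∃ d, HasDerivAt (hcut L) d x ∧ |d| ≤ 4 / L := by
  have hconst {c : ℝ} (hc : hcut L =ᶠ[nhds x] fun _ => c) :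
      ∃ d, HasDerivAt (hcut L) d x ∧ |d| ≤ 4 / L :=
    ⟨0, (hasDerivAt_const x c).congr_of_eventuallyEq hc, by rw [abs_zero]; positivity⟩
  rcases h₁.lt_or_gt with hlo | hlo
  · exact hconst ((continuousAt_id.abs.eventually_lt_const hlo).mono
      fun _ hy => hcut_of_abs_le hL hy.le)
  rcases h₂.lt_or_gt with hhi | hhi
  · exact exists_hasDerivAt_hcut_of_lt_abs_of_abs_lt hL hlo hhi
  · exact hconst ((continuousAt_id.abs.eventually_const_lt hhi).mono
      fun _ => hcut_of_two_mul_lt_abs hL)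

lemma isCutoff_hcut (hL : 0 < L) : IsCutoff (hcut L) L (4 / L) where
  measurable := measurable_hcut L
  eq_one _ hx := hcut_of_abs_le hL hx.le
  ae_mem_Icc := by
    filter_upwards [ae_abs_ne (2 * L)] with x using hcut_mem_Icc hL
  ae_differentiableAt := by
    filter_upwards [ae_abs_ne L, ae_abs_ne (2 * L)] with x h₁ h₂
    obtain ⟨d, hd, -⟩ := exists_hasDerivAt_hcut hL h₁ h₂
    exact hd.differentiableAt
  ae_abs_deriv_le := by
    filter_upwards [ae_abs_ne L, ae_abs_ne (2 * L)] with x h₁ h₂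
    obtain ⟨d, hd, hd_le⟩ := exists_hasDerivAt_hcut hL h₁ h₂
    rwa [hd.deriv]

end StandardCutoff

section Span

variable {ι 𝕜 : Type*} [Fintype ι] [RCLike 𝕜] {h V : ℝ → ℝ} {ψ : ι → ℝ → 𝕜} {a K L M : ℝ}

lemma norm_sum_smul_apply_sq_le {B x : ℝ} (hB : ∑ k, ‖ψ k x‖ ^ 2 ≤ B) (α : ι → 𝕜) :
    ‖(∑ k, α k • ψ k) x‖ ^ 2 ≤ (∑ k, ‖α k‖ ^ 2) * B := by
  simp only [Finset.sum_apply, Pi.smul_apply, smul_eq_mul]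
  exact (norm_sum_mul_sq_le α _).trans (by gcongr)

lemma sum_smul_smul_eq_smul_sum (h : ℝ → ℝ) (ψ : ι → ℝ → 𝕜) (α : ι → 𝕜) :
    ∑ k, α k • (h • ψ k) = h • ∑ k, α k • ψ k := by
  ext x
  simp [Finset.smul_sum]

variable [DecidableEq ι]

lemma IsCutoff.linearIndependent_smul (hh : IsCutoff h L M) (hL : 0 < L) (ha : 0 < a)
    (hON : L2Orthonormal volume ψ) (hψ : ∀ k, AEStronglyMeasurable (ψ k))
    (hψK : ∀ x, ∑ k, ‖ψ k x‖ ^ 2 ≤ K * Real.exp (-2 * a * |x|))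
    (hsmall : K / a * Real.exp (-2 * a * L) < 1) :
    LinearIndependent 𝕜 fun k => h • ψ k := by
  rw [Fintype.linearIndependent_iff]
  intro α hα k
  have hmass := hh.integral_norm_sq_le_add_exp hL ha (hON.memLp_sum_smul hψ α) fun x =>
    (norm_sum_smul_apply_sq_le (hψK x) α).trans_eq (mul_assoc _ _ _).symm
  rw [hON.integral_norm_sq_sum_smul hψ, ← sum_smul_smul_eq_smul_sum, hα] at hmass
  simp only [Pi.zero_apply, norm_zero, zero_pow two_ne_zero, integral_zero, zero_add] at hmass
  have hsum : ∑ k, ‖α k‖ ^ 2 ≤ 0 := by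
    refine nonpos_of_mul_nonpos_left ?_ (sub_pos.2 hsmall)
    rw [mul_one_sub, ← mul_assoc, ← mul_div_assoc]
    exact sub_nonpos.2 hmass
  have hk : ‖α k‖ ^ 2 ≤ 0 :=
    (Finset.single_le_sum (fun l _ => sq_nonneg ‖α l‖) (Finset.mem_univ k)).trans hsum
  simpa using hk

lemma IsCutoff.exists_normalized_mem_span_energy_sub_le (hh : IsCutoff h L M) (hL : 0 < L)
    (ha : 0 < a) (hV : ∀ x, 0 ≤ V x) (hVm : Measurable V) (hON : L2Orthonormal volume ψ)
    (hψ : ∀ k, Differentiable ℝ (ψ k))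
    (hψK : ∀ x, ∑ k, ‖ψ k x‖ ^ 2 ≤ K * Real.exp (-2 * a * |x|))
    (hEK : ∀ x, ∑ k, energyDensity V (ψ k) x ≤ K * Real.exp (-2 * a * |x|))
    (hsmall : K / a * Real.exp (-2 * a * L) ≤ 1 / 2) {v : ℝ → 𝕜}
    (hv : v ∈ Submodule.span 𝕜 (Set.range fun k => h • ψ k)) (hv_norm : ∫ x, ‖v x‖ ^ 2 = 1) :
    ∃ φ ∈ Submodule.span 𝕜 (Set.range ψ), ∫ x, ‖φ x‖ ^ 2 = 1 ∧
      Integrable (energyDensity V (v - φ)) ∧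
      ∫ x, energyDensity V (v - φ) x ≤
        4 * K / a * (2 * K / a + M ^ 2 + 1) * Real.exp (-2 * a * L) := by
  obtain ⟨α, rfl⟩ := (Submodule.mem_span_range_iff_exists_fun 𝕜).1 hv
  rw [sum_smul_smul_eq_smul_sum] at hv_norm ⊢
  have hψm (k : ι) : AEStronglyMeasurable (ψ k) := (hψ k).continuous.aestronglyMeasurable
  have hw_mem : ∑ k, α k • ψ k ∈ Submodule.span 𝕜 (Set.range ψ) :=
    (Submodule.mem_span_range_iff_exists_fun 𝕜).2 ⟨α, rfl⟩
  have hw_diff : Differentiable ℝ (∑ k, α k • ψ k) :=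
    .sum fun k _ => (hψ k).const_smul (α k)
  have hwK (x : ℝ) : ‖(∑ k, α k • ψ k) x‖ ^ 2 ≤
      (∑ k, ‖α k‖ ^ 2) * K * Real.exp (-2 * a * |x|) := by
    rw [mul_assoc]
    exact norm_sum_smul_apply_sq_le (hψK x) α
  have hwE (x : ℝ) : energyDensity V (∑ k, α k • ψ k) x ≤
      (∑ k, ‖α k‖ ^ 2) * K * Real.exp (-2 * a * |x|) := by
    rw [mul_assoc]
    exact (energyDensity_sum_smul_le (hV x) (fun k => hψ k x) α).trans (by gcongr; exact hEK x)
  obtain ⟨r, hr⟩ := hh.exists_normalized_smul_energy_sub_le hL ha hV hVm hw_diff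
    (hON.memLp_sum_smul hψm α) (hON.integral_norm_sq_sum_smul hψm α) hwK hwE hsmall hv_norm
  exact ⟨r • ∑ k, α k • ψ k, Submodule.smul_of_tower_mem _ r hw_mem, hr⟩

theorem cutoff_span_approximation_general (hV : ∀ x, 0 ≤ V x) (hVm : Measurable V)
    (hON : L2Orthonormal volume ψ) (hψ : ∀ k, Differentiable ℝ (ψ k)) (ha : 0 < a)
    (hψK : ∀ x, ∑ k, ‖ψ k x‖ ^ 2 ≤ K * Real.exp (-2 * a * |x|))
    (hEK : ∀ x, ∑ k, energyDensity V (ψ k) x ≤ K * Real.exp (-2 * a * |x|)) :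
    ∃ Lj > 0, ∃ cj > 0, ∀ L, Lj < L →
      Module.finrank 𝕜 (Submodule.span 𝕜 (Set.range fun k x => (hcut L x : 𝕜) * ψ k x)) =
        Fintype.card ι ∧
      ∀ v ∈ Submodule.span 𝕜 (Set.range fun k x => (hcut L x : 𝕜) * ψ k x), ∫ x, ‖v x‖ ^ 2 = 1 →
        ∃ φ ∈ Submodule.span 𝕜 (Set.range ψ), ∫ x, ‖φ x‖ ^ 2 = 1 ∧
          Integrable (energyDensity V (v - φ)) ∧
          ∫ x, energyDensity V (v - φ) x ≤ cj * Real.exp (-2 * a * L) := by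
  have hK : 0 ≤ K := by
    simpa using (Finset.sum_nonneg fun k _ => sq_nonneg ‖ψ k 0‖).trans (hψK 0)
  have hsmall : ∀ᶠ L in atTop, K / a * Real.exp (-2 * a * L) < 1 / 2 := by
    have hlim : Tendsto (fun L => K / a * Real.exp (-2 * a * L)) atTop (nhds (K / a * 0)) :=
      (Real.tendsto_exp_atBot.comp
        (tendsto_id.const_mul_atTop_of_neg (by linarith : -2 * a < 0))).const_mul _
    exact hlim.eventually_lt_const (by norm_num)
  obtain ⟨Lj, hLj, hsmall⟩ := (atTop_basis_Ioi' (1 : ℝ)).eventually_iff.1 hsmall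
  refine ⟨Lj, one_pos.trans hLj, 4 * K / a * (2 * K / a + 4 ^ 2 + 1) + 1, by positivity,
    fun L hL_gt => ?_⟩
  have hL : 0 < L := one_pos.trans (hLj.trans hL_gt)
  have hsmall_L : K / a * Real.exp (-2 * a * L) < 1 / 2 := hsmall hL_gt
  have hcutoff : IsCutoff (hcut L) L 4 :=
    (isCutoff_hcut hL).mono (div_le_self (by norm_num) (hLj.trans hL_gt).le)
  have hcut_smul : (fun k x => (hcut L x : 𝕜) * ψ k x) = fun k => hcut L • ψ k :=
    funext fun k => funext fun x => (RCLike.real_smul_eq_coe_mul _ _).symm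
  rw [hcut_smul]
  constructor
  · exact finrank_span_eq_card (hcutoff.linearIndependent_smul hL ha hON
      (fun k => (hψ k).continuous.aestronglyMeasurable) hψK (by linarith))
  · intro v hv hv_norm
    obtain ⟨φ, hφ, hφ_norm, hint, henergy⟩ := hcutoff.exists_normalized_mem_span_energy_sub_le
      hL ha hV hVm hON hψ hψK hEK hsmall_L.le hv hv_norm
    exact ⟨φ, hφ, hφ_norm, hint, henergy.trans (by gcongr; exact le_add_of_nonneg_right one_pos.le)⟩

end Span

section Eigenfunctions

variable {E ι : Type*} [NormedAddCommGroup E] [Fintype ι] {ψ : ι → ℝ → E} {lam : ι → ℝ} {a c x : ℝ}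

lemma sq_mul_exp_neg_mul (c a y : ℝ) :
    (c * Real.exp (-a * y)) ^ 2 = c ^ 2 * Real.exp (-2 * a * y) := by
  rw [mul_pow, ← Real.exp_nat_mul]
  ring_nf

lemma sum_norm_sq_le_mul_exp {κ : ι → ℝ} (hκ : ∀ k, 1 ≤ κ k)
    (hψ : ∀ k, ‖ψ k x‖ ≤ c * Real.exp (-a * |x|)) :
    ∑ k, ‖ψ k x‖ ^ 2 ≤ (∑ k, κ k) * c ^ 2 * Real.exp (-2 * a * |x|) := by
  rw [mul_assoc, ← sq_mul_exp_neg_mul, Finset.sum_mul]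
  exact Finset.sum_le_sum fun k _ => (pow_le_pow_left₀ (norm_nonneg _) (hψ k) 2).trans
    (le_mul_of_one_le_left (sq_nonneg _) (hκ k))

lemma sum_energyDensity_le_mul_exp_of_eigenfunctions [NormedSpace ℝ E] {V : ℝ → ℝ} (hV : 0 ≤ V x)
    (heq : ∀ k, -deriv (deriv (ψ k)) x + V x • ψ k x = lam k • ψ k x)
    (hψ : ∀ k, ‖ψ k x‖ ≤ c * Real.exp (-a * |x|) ∧ ‖deriv (ψ k) x‖ ≤ c * Real.exp (-a * |x|) ∧
      ‖deriv (deriv (ψ k)) x‖ ≤ c * Real.exp (-a * |x|)) :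
    ∑ k, energyDensity V (ψ k) x ≤ (∑ k, (2 + |lam k|)) * c ^ 2 * Real.exp (-2 * a * |x|) := by
  rw [mul_assoc, ← sq_mul_exp_neg_mul, Finset.sum_mul]
  exact Finset.sum_le_sum fun k _ =>
    energyDensity_le_of_eigenfunction hV (heq k) (hψ k).1 (hψ k).2.1 (hψ k).2.2

end Eigenfunctions

/-- with `ψ_k^L = h_L ψ_k` and `U_j(L) = span{ψ_1^L, …, ψ_j^L}`, for `L`
large: (1) `dim U_j(L) = j`; (2) every `L²`-normalized `v ∈ U_j(L)` is exponentially close,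
in the energy form `𝔞¹`, to some normalized `φ ∈ span{ψ_1, …, ψ_j}`. -/
theorem cutoff_span_approximation
    (V : ℝ → ℝ) (b₀ : ℝ) (hb₀ : 0 < b₀) (hVlb : ∀ x, b₀ ≤ V x)
    (hVc : Continuous V)
    (hVinf : Filter.Tendsto V (Filter.cocompact ℝ) Filter.atTop)
    (hVgrow : ∀ b > (0 : ℝ), ∃ k > (0 : ℝ), ∀ x : ℝ, |V x| ≤ k * Real.exp (b * |x|))
    (j : ℕ) (hj : 0 < j)
    (ψ : Fin j → ℝ → ℂ) (lam : Fin j → ℝ)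
    (hsm : ∀ k, ContDiff ℝ 2 (ψ k))
    (hON : ∀ k l, ∫ x : ℝ, (starRingEnd ℂ) (ψ k x) * ψ l x
            = if k = l then (1 : ℂ) else 0)
    (heq : ∀ k, ∀ x : ℝ,
      -(deriv (deriv (ψ k)) x) + (V x : ℂ) * ψ k x = ((lam k : ℝ) : ℂ) * ψ k x)
    (c a : ℝ) (hc : 0 < c) (ha : 0 < a)
    (hdec : ∀ k, ∀ x : ℝ, ‖ψ k x‖ ≤ c * Real.exp (-a * |x|)
      ∧ ‖deriv (ψ k) x‖ ≤ c * Real.exp (-a * |x|)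
      ∧ ‖deriv (deriv (ψ k)) x‖ ≤ c * Real.exp (-a * |x|)) :
    ∃ Lj > (0 : ℝ), ∃ cj > (0 : ℝ), ∀ L : ℝ, Lj < L →
      (Module.finrank ℂ
        (Submodule.span ℂ
          (Set.range (fun k : Fin j => fun x : ℝ => (hcut L x : ℂ) * ψ k x))) = j)
      ∧ ∀ v : ℝ → ℂ,
          v ∈ Submodule.span ℂ
            (Set.range (fun k : Fin j => fun x : ℝ => (hcut L x : ℂ) * ψ k x)) →
          (∫ x : ℝ, ‖v x‖ ^ 2) = 1 →
          ∃ φ ∈ Submodule.span ℂ (Set.range ψ),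
            (∫ x : ℝ, ‖φ x‖ ^ 2) = 1 ∧
            (∫ x : ℝ, (‖deriv (fun y => v y - φ y) x‖ ^ 2 + V x * ‖v x - φ x‖ ^ 2))
              ≤ cj * Real.exp (-2 * a * L) := by
  have hV (x : ℝ) : 0 ≤ V x := hb₀.le.trans (hVlb x)
  have hmass (x : ℝ) := sum_norm_sq_le_mul_exp (κ := fun k => 2 + |lam k|)
    (fun k => by linarith [abs_nonneg (lam k)]) fun k => (hdec k x).1
  have henergy (x : ℝ) := sum_energyDensity_le_mul_exp_of_eigenfunctions (hV x)
    (fun k => heq k x) fun k => hdec k x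
  obtain ⟨Lj, hLj, cj, hcj, happrox⟩ := cutoff_span_approximation_general hV hVc.measurable hON
    (fun k => (hsm k).differentiable two_ne_zero) ha hmass henergy
  refine ⟨Lj, hLj, cj, hcj, fun L hL =>
    ⟨(happrox L hL).1.trans (Fintype.card_fin j), fun v hv hv_norm => ?_⟩⟩
  obtain ⟨φ, hφ, hφ_norm, -, hφ_energy⟩ := (happrox L hL).2 v hv hv_norm
  exact ⟨φ, hφ, hφ_norm, hφ_energy⟩
end

section
/- Let V : ℝ → ℝ be continuous, bounded below by b₀ > 0, with V(x) → ∞ as |x| → ∞ and |V(x)| ≤ k_b e^{b|x|} for every b > 0 and suitable k_b > 0. For j ≥ 1 let λ_j be the j-th eigenvalue of H u = −u'' + Vu on L²(ℝ), characterized by the min-max principle λ_j = min over j-dimensional subspaces 𝑉 of the form domain D(𝔞¹) of max_{u ∈ 𝑉, u ≠ 0} 𝔞¹(u,u)/⟨u,u⟩, and let λ_j^L be the j-th eigenvalue of the Dirichlet restriction H_L on (−L, L), characterized by λ_j^L = min over j-dimensional subspaces 𝑉 of W^{1,2}_0(−L,L) of max_{u ∈ 𝑉, u ≠ 0} 𝔞^{1,L}(u,u)/⟨u,u⟩.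 Then for all sufficiently large L there exist constants c_j > 0 and a > 0, independent of L, such that λ_j < λ_j^L < λ_j + c_j e^{−2aL}. -/
open MeasureTheory

/-- Membership in (a core of) the form domain `D(𝔞¹) = W^{1,2}(ℝ) ∩ {u : ‖V^{1/2}u‖ < ∞}`
of the Schrödinger operator `Hu = −u'' + Vu` on `L²(ℝ)`. -/
def InFormDomain (V : ℝ → ℝ) (u : ℝ → ℂ) : Prop :=
  Differentiable ℝ u ∧ MemLp u 2 ∧ MemLp (deriv u) 2 ∧
    Integrable (fun x => V x * ‖u x‖ ^ 2)

/-- Membership in (a core of) `W^{1,2}_0(−L, L)`, functions extended by zero to `ℝ`. -/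
def InDirichletDomain (L : ℝ) (u : ℝ → ℂ) : Prop :=
  Differentiable ℝ u ∧ (∀ x : ℝ, L ≤ |x| → u x = 0) ∧ MemLp u 2 ∧ MemLp (deriv u) 2

/-- The quadratic form `𝔞¹(u,u) = ∫ (|u'|² + V|u|²)`. -/
noncomputable def schForm (V : ℝ → ℝ) (u : ℝ → ℂ) : ℝ :=
  ∫ x : ℝ, (‖deriv u x‖ ^ 2 + V x * ‖u x‖ ^ 2)

/-- The `j`-th min-max value of the form `𝔞¹` over subspaces contained in the class `P`. -/
noncomputable def minmax (V : ℝ → ℝ) (P : (ℝ → ℂ) → Prop) (j : ℕ) : ℝ :=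
  sInf {r : ℝ | ∃ W : Submodule ℂ (ℝ → ℂ),
    (∀ u ∈ W, P u) ∧ Module.finrank ℂ W = j ∧
    r = sSup {q : ℝ | ∃ u ∈ W, u ≠ 0 ∧
      q = schForm V u / (∫ x : ℝ, ‖u x‖ ^ 2)}}

open Set Filter Topology

/-!
Strict domain monotonicity: let `θ` be the Prüfer angle of `-y'' + V y = λ y` started at
`θ (-L) = 0`. If `θ L ≤ j π`, then a `j`-dimensional subspace of `W^{1,2}_0(-L, L)` contains a
nonzero `u` vanishing at the at most `j - 1` interior zeros of `sin θ`, and Picone's identity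
(integrate the derivative of `|u|² cot θ`) gives `𝔞(u, u) ≥ λ ⟨u, u⟩`. Hence `θ L ≥ j π` at
`λ = λ_j^L`. The angle exceeds `j π` at `L + 1` and depends continuously on `λ`, so for some `λ`
below `λ_j^L` it still reaches `j π` on `(-L, L + 1)`; the `j` nodal pieces of that solution are
whole-line trial functions showing `λ_j < λ_j^L`.

Upper bound: multiply near-optimal whole-line trial functions `u` by `χ = s²` with
`s = 1 - cosh (k x) / cosh (k L)`. Up to the total derivative of `χ χ' |u|²`, the localization error
is at most `2 s³ k² (1 - s) |u|²`. Where `V - λ ≥ k²` the potential energy `(V - λ)(1 - s⁴) |u|²`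
released by the cutoff absorbs it, and on the remaining compact set `1 - s = O(e^{-kL})`.
-/

section Prufer

variable {q θ : ℝ → ℝ} {a b : ℝ}

/-- The right-hand side of the equation `θ' = cos² θ - q sin² θ` satisfied by the Prüfer angle of
a solution of `y'' = q y`, that is, by the angle in `y = r sin θ`, `y' = r cos θ`. -/
noncomputable def pruferField (q : ℝ → ℝ) (t θ : ℝ) : ℝ :=
  Real.cos θ ^ 2 - q t * Real.sin θ ^ 2

/-- `θ` is a Prüfer angle on `[a, b]` for the equation `y'' = q y`. The derivative is two-sided,
also at `a` and `b`. -/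
def IsPruferAngle (q : ℝ → ℝ) (a b : ℝ) (θ : ℝ → ℝ) : Prop :=
  ∀ t ∈ Icc a b, HasDerivAt θ (pruferField q t (θ t)) t

lemma IsPruferAngle.mono {c d : ℝ} (hθ : IsPruferAngle q a b θ) (hac : a ≤ c) (hdb : d ≤ b) :
    IsPruferAngle q c d θ :=
  fun t ht => hθ t ⟨hac.trans ht.1, ht.2.trans hdb⟩

lemma IsPruferAngle.continuousOn (hθ : IsPruferAngle q a b θ) : ContinuousOn θ (Icc a b) :=
  fun t ht => (hθ t ht).continuousAt.continuousWithinAt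

lemma pruferField_sub (t x y : ℝ) :
    pruferField q t x - pruferField q t y =
      -(1 + q t) * (Real.sin (x - y) * Real.sin (x + y)) := by
  have hx := Real.sin_sq_add_cos_sq x
  have hy := Real.sin_sq_add_cos_sq y
  rw [Real.sin_sub, Real.sin_add, pruferField, pruferField]
  linear_combination hx - hy +
    (1 + q t) * (Real.sin x ^ 2 * hy - Real.sin y ^ 2 * hx)

lemma lipschitzWith_pruferField {t K : ℝ} (hK : |q t| ≤ K) :
    LipschitzWith (Real.toNNReal (1 + K)) (pruferField q t) := by
  have hK0 : 0 ≤ K := (abs_nonneg _).trans hK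
  refine LipschitzWith.of_dist_le_mul fun x y => ?_
  rw [Real.dist_eq, Real.dist_eq, Real.coe_toNNReal _ (by positivity), pruferField_sub, abs_mul,
    abs_neg, abs_mul]
  have hcoeff : |1 + q t| ≤ 1 + K := (abs_add_le _ _).trans (by simpa using hK)
  have hsin : |Real.sin (x - y)| * |Real.sin (x + y)| ≤ |x - y| :=
    (mul_le_of_le_one_right (abs_nonneg _) (Real.abs_sin_le_one _)).trans Real.abs_sin_le_abs
  gcongr

lemma abs_pruferField_le {t K : ℝ} (hK : |q t| ≤ K) (x : ℝ) : |pruferField q t x| ≤ 1 + K := by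
  have hq := abs_le.1 hK
  have hx := Real.sin_sq_add_cos_sq x
  rw [pruferField, abs_le]
  constructor <;> nlinarith [sq_nonneg (Real.sin x), sq_nonneg (Real.cos x)]

lemma exists_isPruferAngle (hq : Continuous q) (hab : a ≤ b) (θ₀ : ℝ) :
    ∃ θ, θ a = θ₀ ∧ IsPruferAngle q a b θ := by
  obtain ⟨K, hK⟩ := (isCompact_Icc (a := a - 1) (b := b + 1)).exists_bound_of_continuousOn
    hq.continuousOn
  have ha : a ∈ Icc (a - 1) (b + 1) := ⟨by linarith, by linarith⟩
  have hK0 : 0 ≤ K := (norm_nonneg _).trans (hK a ha)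
  have hPL : IsPicardLindelof (pruferField q) (tmin := a - 1) (tmax := b + 1) ⟨a, ha⟩ θ₀
      (Real.toNNReal ((1 + K) * (b - a + 1))) 0 (Real.toNNReal (1 + K))
      (Real.toNNReal (1 + K)) := by
    refine ⟨fun t ht => (lipschitzWith_pruferField (hK t ht)).lipschitzOnWith,
      fun x _ => ?_, fun t ht x _ => ?_, ?_⟩
    · exact Continuous.continuousOn (by unfold pruferField; fun_prop)
    · rw [Real.coe_toNNReal _ (by linarith)]
      exact abs_pruferField_le (hK t ht) x
    · rw [Real.coe_toNNReal _ (by linarith), Real.coe_toNNReal _ (by nlinarith), NNReal.coe_zero,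
        sub_zero]
      exact mul_le_mul_of_nonneg_left (max_le (by simp only; linarith) (by simp only; linarith))
        (by linarith)
  obtain ⟨θ, hθa, hθ⟩ := hPL.exists_eq_forall_mem_Icc_hasDerivWithinAt₀
  exact ⟨θ, hθa, fun t ht => (hθ t ⟨by linarith [ht.1], by linarith [ht.2]⟩).hasDerivAt
    (Icc_mem_nhds (by linarith [ht.1]) (by linarith [ht.2]))⟩

lemma nonneg_of_deriv_pos_of_eq_zero {f f' : ℝ → ℝ}
    (hf : ∀ x ∈ Icc a b, HasDerivAt f (f' x) x) (hpos : ∀ x ∈ Icc a b, f x = 0 → 0 < f' x)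
    (ha : 0 ≤ f a) : ∀ x ∈ Icc a b, 0 ≤ f x := by
  intro x hx
  refine neg_nonpos.1 <| image_le_of_deriv_right_lt_deriv_boundary (f := fun x => -f x)
    (f' := fun x => -f' x) (B := fun _ => 0) (B' := fun _ => 0)
    (fun x hx => (hf x hx).continuousAt.neg.continuousWithinAt)
    (fun x hx => (hf x (Ico_subset_Icc_self hx)).neg.hasDerivWithinAt) (neg_nonpos.2 ha)
    (fun x => hasDerivAt_const _ _) (fun x hx hx0 => ?_) hx
  exact neg_neg_of_pos (hpos x (Ico_subset_Icc_self hx) (neg_eq_zero.1 hx0))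

lemma pos_of_deriv_pos_of_eq_zero {f f' : ℝ → ℝ} (hab : a < b)
    (hf : ∀ x ∈ Icc a b, HasDerivAt f (f' x) x) (hpos : ∀ x ∈ Icc a b, f x = 0 → 0 < f' x)
    (ha : 0 ≤ f a) : 0 < f b := by
  have hnonneg := nonneg_of_deriv_pos_of_eq_zero hf hpos ha
  have hb : b ∈ Icc a b := right_mem_Icc.2 hab.le
  refine (hnonneg b hb).lt_of_ne' fun hfb => (hpos b hb hfb).not_ge ?_
  have hslope : Tendsto (slope f b) (𝓝[<] b) (𝓝 (f' b)) :=
    (hasDerivAt_iff_tendsto_slope.1 (hf b hb)).mono_left (nhdsWithin_mono _ fun _ hx => ne_of_lt hx)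
  refine le_of_tendsto hslope ?_
  filter_upwards [Ioo_mem_nhdsLT hab] with x hx
  rw [slope_def_field, hfb, sub_zero]
  exact div_nonpos_of_nonneg_of_nonpos (hnonneg x (Ioo_subset_Icc_self hx)) (by linarith [hx.2])

-- Where `θ ∈ πℤ` the equation reads `θ' = 1`.
lemma IsPruferAngle.int_mul_pi_lt (hθ : IsPruferAngle q a b θ) (hab : a < b) {n : ℤ}
    (ha : n * Real.pi ≤ θ a) : n * Real.pi < θ b := by
  refine sub_pos.1 <| pos_of_deriv_pos_of_eq_zero (f := fun t => θ t - n * Real.pi) hab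
    (fun t ht => (hθ t ht).sub_const _) (fun t _ ht => ?_) (sub_nonneg.2 ha)
  have hsin : Real.sin (θ t) = 0 := by rw [sub_eq_zero.1 ht, Real.sin_int_mul_pi]
  have hcos := Real.sin_sq_add_cos_sq (θ t)
  rw [hsin] at hcos
  rw [pruferField, hsin]
  linarith

lemma IsPruferAngle.le_of_le_int_mul_pi (hθ : IsPruferAngle q a b θ) {x y : ℝ} (hx : x ∈ Icc a b)
    (hy : y ∈ Icc a b) {n : ℤ} (hxn : θ x ≤ n * Real.pi) (hyn : n * Real.pi ≤ θ y) : x ≤ y :=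
  le_of_not_gt fun hyx => ((hθ.mono hy.1 hx.2).int_mul_pi_lt hyx hyn).not_ge hxn

lemma IsPruferAngle.exists_forall_abs_sub_lt (hq : Continuous q) (hab : a ≤ b)
    (hθ : IsPruferAngle q a b θ) {ε : ℝ} (hε : 0 < ε) :
    ∃ δ > 0, ∀ p η, (∀ t ∈ Icc a b, |p t - q t| ≤ δ) → η a = θ a → IsPruferAngle p a b η →
      |η b - θ b| < ε := by
  obtain ⟨K, hK⟩ := isCompact_Icc.exists_bound_of_continuousOn (s := Icc a b) hq.continuousOn
  have hgronwall := (gronwallBound_continuous_ε 0 (Real.toNNReal (1 + K)) (b - a)).tendsto 0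
  rw [gronwallBound_ε0_δ0] at hgronwall
  obtain ⟨δ, hδ, hδε⟩ := Metric.eventually_nhds_iff.1 (hgronwall.eventually (gt_mem_nhds hε))
  refine ⟨δ / 2, half_pos hδ, fun p η hp hηa hη => ?_⟩
  have hfield : ∀ t ∈ Ico a b, dist (pruferField p t (η t)) (pruferField q t (η t)) ≤ δ / 2 := by
    intro t ht
    calc dist (pruferField p t (η t)) (pruferField q t (η t))
        = |p t - q t| * Real.sin (η t) ^ 2 := by
          rw [Real.dist_eq, ← abs_of_nonneg (sq_nonneg (Real.sin (η t))), ← abs_mul, ← abs_neg,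
            pruferField, pruferField]
          ring_nf
      _ ≤ |p t - q t| := mul_le_of_le_one_right (abs_nonneg _) (Real.sin_sq_le_one _)
      _ ≤ δ / 2 := hp t (Ico_subset_Icc_self ht)
  have hdist := dist_le_of_approx_trajectories_ODE_of_mem (s := fun _ => univ) (δ := 0) (εg := 0)
    (fun t ht => (lipschitzWith_pruferField (hK t (Ico_subset_Icc_self ht))).lipschitzOnWith)
    hη.continuousOn (fun t ht => (hη t (Ico_subset_Icc_self ht)).hasDerivWithinAt) hfield
    (fun _ _ => mem_univ _) hθ.continuousOn
    (fun t ht => (hθ t (Ico_subset_Icc_self ht)).hasDerivWithinAt) (fun _ _ => (dist_self _).le)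
    (fun _ _ => mem_univ _) (by rw [hηa, dist_self]) b (right_mem_Icc.2 hab)
  refine hdist.trans_lt (hδε ?_)
  rw [add_zero, dist_zero_right, Real.norm_of_nonneg (by positivity)]
  exact half_lt_self hδ

lemma IsPruferAngle.exists_amplitude (hq : Continuous q) (hab : a ≤ b)
    (hθ : IsPruferAngle q a b θ) :
    ∃ r : ℝ → ℝ, (∀ t, 0 < r t) ∧ ∀ t ∈ Icc a b,
      HasDerivAt (fun t => r t * Real.sin (θ t)) (r t * Real.cos (θ t)) t ∧
      HasDerivAt (fun t => r t * Real.cos (θ t)) (q t * (r t * Real.sin (θ t))) t := by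
  have hρ : ContinuousOn (fun t => (1 + q t) * (Real.sin (θ t) * Real.cos (θ t))) (Icc a b) := by
    have := hθ.continuousOn
    fun_prop
  set ρ := IccExtend hab ((Icc a b).domRestrict fun t =>
    (1 + q t) * (Real.sin (θ t) * Real.cos (θ t)))
  have hr : ∀ t ∈ Icc a b, HasDerivAt (fun t => Real.exp (∫ s in a..t, ρ s))
      (Real.exp (∫ s in a..t, ρ s) * ((1 + q t) * (Real.sin (θ t) * Real.cos (θ t)))) t := by
    intro t ht
    have hcont := hρ.domRestrict.Icc_extend' (h := hab)
    have hd := (hcont.integral_hasStrictDerivAt a t).hasDerivAt.exp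
    rwa [IccExtend_of_mem hab _ ht] at hd
  refine ⟨fun t => Real.exp (∫ s in a..t, ρ s), fun t => Real.exp_pos _, fun t ht =>
    ⟨((hr t ht).mul (hθ t ht).sin).congr_deriv ?_,
      ((hr t ht).mul (hθ t ht).cos).congr_deriv ?_⟩⟩
  all_goals
    have htrig := Real.sin_sq_add_cos_sq (θ t)
    simp only [pruferField]
  · linear_combination (Real.exp (∫ s in a..t, ρ s) * Real.cos (θ t)) * htrig
  · linear_combination (Real.exp (∫ s in a..t, ρ s) * q t * Real.sin (θ t)) * htrig

end Prufer

section DisjointSupport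

variable {ι : Type*} {α E : Type*}

lemma linearIndependent_of_pairwise_disjoint_support {𝕜 : Type*} [Field 𝕜] {u : ι → α → 𝕜}
    (hdisj : Pairwise fun i j => Disjoint (Function.support (u i)) (Function.support (u j)))
    (hne : ∀ i, u i ≠ 0) : LinearIndependent 𝕜 u := by
  refine linearIndependent_iff'.2 fun s c hc i hi => ?_
  obtain ⟨x, hx⟩ := Function.ne_iff.1 (hne i)
  have hzero : ∀ k ≠ i, u k x = 0 := fun k hk =>
    Function.notMem_support.1 fun hkx => (hdisj hk).le_bot ⟨hkx, hx⟩
  have hsum : ∑ k ∈ s, c k * u k x = 0 := by simpa using congrFun hc x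
  rw [Finset.sum_eq_single_of_mem i hi fun k _ hk => by rw [hzero k hk, mul_zero]] at hsum
  exact (mul_eq_zero.1 hsum).resolve_right hx

lemma norm_sum_sq_of_pairwise_disjoint_support [Fintype ι] [NormedAddCommGroup E] {f : ι → α → E}
    (hdisj : Pairwise fun i j => Disjoint (Function.support (f i)) (Function.support (f j)))
    (x : α) : ‖∑ i, f i x‖ ^ 2 = ∑ i, ‖f i x‖ ^ 2 := by
  by_cases hx : ∃ i, f i x ≠ 0
  · obtain ⟨i, hi⟩ := hx
    have hzero : ∀ k ≠ i, f k x = 0 := fun k hk =>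
      Function.notMem_support.1 fun hkx => (hdisj hk).le_bot ⟨hkx, hi⟩
    rw [Fintype.sum_eq_single i hzero, Fintype.sum_eq_single i fun k hk => by simp [hzero k hk]]
  · push Not at hx
    simp [hx]

lemma pairwise_disjoint_support_of_monotoneOn [Zero E] {t : ℕ → ℝ} {n : ℕ}
    (ht : MonotoneOn t (Iic n)) {u : Fin n → ℝ → E}
    (hu : ∀ k : Fin n, Function.support (u k) ⊆ Ioo (t k) (t (k + 1))) :
    Pairwise fun i k => Disjoint (Function.support (u i)) (Function.support (u k)) := by
  have hlt : ∀ i k, i < k → Disjoint (Function.support (u i)) (Function.support (u k)) := by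
    refine fun i k hik => Set.disjoint_left.2 fun x hxi hxk => ?_
    have hle : t (i + 1) ≤ t k := ht (mem_Iic.2 i.2) (mem_Iic.2 k.2.le) (Fin.lt_def.1 hik)
    linarith [(hu i hxi).2, (hu k hxk).1]
  exact fun i k hik => hik.lt_or_gt.elim (hlt i k) fun h => (hlt k i h).symm

-- A nonzero derivative at `x` forces the function to be nonzero near `x`, away from `x`.
lemma disjoint_support_deriv [NormedAddCommGroup E] [NormedSpace ℝ E] {u v : ℝ → E}
    (hdisj : Disjoint (Function.support u) (Function.support v)) :
    Disjoint (Function.support (deriv u)) (Function.support (deriv v)) := by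
  refine Set.disjoint_left.2 fun x hux hvx => ?_
  have hu := (differentiableAt_of_deriv_ne_zero hux).hasDerivAt.eventually_ne (c := 0) hux
  have hv := (differentiableAt_of_deriv_ne_zero hvx).hasDerivAt.eventually_ne (c := 0) hvx
  obtain ⟨y, huy, hvy⟩ := (hu.and hv).exists
  exact hdisj.le_bot ⟨huy, hvy⟩

end DisjointSupport

section FiniteDimensional

lemma exists_norm_le_of_injective {W E F : Type*} [AddCommGroup W] [Module ℂ W]
    [FiniteDimensional ℂ W] [NormedAddCommGroup E] [NormedSpace ℂ E] [NormedAddCommGroup F]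
    [NormedSpace ℂ F] (S : W →ₗ[ℂ] F) {T : W →ₗ[ℂ] E} (hT : Function.Injective T) :
    ∃ C, ∀ u, ‖S u‖ ≤ C * ‖T u‖ := by
  let e := LinearEquiv.ofInjective T hT
  have : FiniteDimensional ℂ (LinearMap.range T) := e.finiteDimensional
  let R := LinearMap.toContinuousLinearMap (S ∘ₗ e.symm.toLinearMap)
  refine ⟨‖R‖, fun u => ?_⟩
  simpa [R, e] using R.le_opNorm (e u)

lemma exists_ne_zero_forall_eq_zero {α : Type*} {U : Submodule ℂ (α → ℂ)} {S : Finset α}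
    (hS : S.card < Module.finrank ℂ U) : ∃ u ∈ U, u ≠ 0 ∧ ∀ x ∈ S, u x = 0 := by
  have : FiniteDimensional ℂ U := Module.finite_of_finrank_pos (by lia)
  let T : U →ₗ[ℂ] S → ℂ := LinearMap.funLeft ℂ ℂ Subtype.val ∘ₗ U.subtype
  have hker : LinearMap.ker T ≠ ⊥ := LinearMap.ker_ne_bot_of_finrank_lt (by simpa using hS)
  obtain ⟨u, hu, hne⟩ := Submodule.exists_mem_ne_zero_of_ne_bot hker
  exact ⟨u, u.2, by simpa using hne, fun x hx => congrFun (LinearMap.mem_ker.1 hu) ⟨x, hx⟩⟩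

variable {α W : Type*} [MeasurableSpace α] {ν : Measure α} [AddCommGroup W] [Module ℂ W]

lemma integrable_norm_sq {E : Type*} [NormedAddCommGroup E] {f : α → E} (hf : MemLp f 2 ν) :
    Integrable (fun x => ‖f x‖ ^ 2) ν :=
  (memLp_two_iff_integrable_sq_norm hf.1).1 hf

lemma norm_toLp_two_sq {f : α → ℂ} (hf : MemLp f 2 ν) : ‖hf.toLp f‖ ^ 2 = ∫ x, ‖f x‖ ^ 2 ∂ν := by
  have hnonneg : 0 ≤ ∫ x, ‖f x‖ ^ 2 ∂ν := integral_nonneg fun x => by positivity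
  rw [Lp.norm_toLp, hf.eLpNorm_eq_integral_rpow_norm two_ne_zero ENNReal.ofNat_ne_top]
  simp only [ENNReal.toReal_ofNat, Real.rpow_ofNat]
  rw [ENNReal.toReal_ofReal (by positivity), ← Real.rpow_natCast, ← Real.rpow_mul hnonneg]
  norm_num

lemma exists_integral_norm_sq_le [FiniteDimensional ℂ W] (f g : W →ₗ[ℂ] α → ℂ)
    (hf : ∀ u, MemLp (f u) 2 ν) (hg : ∀ u, MemLp (g u) 2 ν)
    (hinj : ∀ u, ∫ x, ‖g u x‖ ^ 2 ∂ν = 0 → u = 0) :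
    ∃ C, ∀ u, ∫ x, ‖f u x‖ ^ 2 ∂ν ≤ C * ∫ x, ‖g u x‖ ^ 2 ∂ν := by
  let toL2 (h : W →ₗ[ℂ] α → ℂ) (hh : ∀ u, MemLp (h u) 2 ν) : W →ₗ[ℂ] Lp ℂ 2 ν :=
    { toFun := fun u => (hh u).toLp
      map_add' := fun u v => by simp only [map_add]; rfl
      map_smul' := fun c u => by simp only [map_smul]; rfl }
  have hT : Function.Injective (toL2 g hg) := by
    refine (injective_iff_map_eq_zero _).2 fun u hu => hinj u ?_
    rw [← norm_toLp_two_sq (hg u)]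
    exact pow_eq_zero_iff two_ne_zero |>.2 (norm_eq_zero.2 hu)
  obtain ⟨C, hC⟩ := exists_norm_le_of_injective (toL2 f hf) hT
  refine ⟨C ^ 2, fun u => ?_⟩
  rw [← norm_toLp_two_sq (hf u), ← norm_toLp_two_sq (hg u), ← mul_pow]
  exact pow_le_pow_left₀ (norm_nonneg _) (hC u) 2

end FiniteDimensional

section Form

variable {V : ℝ → ℝ} {u : ℝ → ℂ} {L : ℝ}

namespace InFormDomain

lemma integrable_form (hu : InFormDomain V u) :
    Integrable fun x => ‖deriv u x‖ ^ 2 + V x * ‖u x‖ ^ 2 :=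
  (integrable_norm_sq hu.2.2.1).add hu.2.2.2

lemma integrable_form_sub (hu : InFormDomain V u) (μ : ℝ) :
    Integrable fun x => ‖deriv u x‖ ^ 2 + (V x - μ) * ‖u x‖ ^ 2 := by
  refine (hu.integrable_form.sub ((integrable_norm_sq hu.2.1).const_mul μ)).congr
    (.of_forall fun x => ?_)
  simp only [Pi.sub_apply]
  ring

lemma schForm_sub (hu : InFormDomain V u) (μ : ℝ) :
    schForm V u - μ * ∫ x, ‖u x‖ ^ 2 = ∫ x, ‖deriv u x‖ ^ 2 + (V x - μ) * ‖u x‖ ^ 2 := by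
  rw [schForm, ← integral_const_mul,
    ← integral_sub hu.integrable_form ((integrable_norm_sq hu.2.1).const_mul μ)]
  exact integral_congr_ae (.of_forall fun x => by ring)

lemma eq_zero_of_integral_eq_zero (hu : InFormDomain V u) (h : ∫ x, ‖u x‖ ^ 2 = 0) : u = 0 := by
  have hae := (integral_eq_zero_iff_of_nonneg (fun x => by positivity)
    (integrable_norm_sq hu.2.1)).1 h
  have heq : u =ᵐ[volume] 0 := hae.mono fun x hx => by simpa using hx
  exact Continuous.ae_eq_iff_eq volume hu.1.continuous continuous_zero |>.1 heq

lemma integral_norm_sq_pos (hu : InFormDomain V u) (hne : u ≠ 0) : 0 < ∫ x, ‖u x‖ ^ 2 :=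
  (integral_nonneg fun x => by positivity).lt_of_ne'
    fun h => hne (hu.eq_zero_of_integral_eq_zero h)

end InFormDomain

/-- `W^{1,2}_0(-L, L)` as a subspace of the space of all functions. -/
def dirichletSubmodule (L : ℝ) : Submodule ℂ (ℝ → ℂ) where
  carrier := {u | InDirichletDomain L u}
  zero_mem' := ⟨differentiable_const 0, fun _ _ => rfl, MemLp.zero,
    by rw [deriv_zero]; exact MemLp.zero⟩
  add_mem' {u v} hu hv := by
    have hderiv : deriv (u + v) = deriv u + deriv v := funext fun x => deriv_add (hu.1 x) (hv.1 x)
    exact ⟨hu.1.add hv.1, fun x hx => by simp [hu.2.1 x hx, hv.2.1 x hx], hu.2.2.1.add hv.2.2.1,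
      hderiv ▸ hu.2.2.2.add hv.2.2.2⟩
  smul_mem' c u hu := by
    have hderiv : deriv (c • u) = c • deriv u := funext fun x => deriv_const_smul c (hu.1 x)
    exact ⟨hu.1.const_smul c, fun x hx => by simp [hu.2.1 x hx], hu.2.2.1.const_smul c,
      hderiv ▸ hu.2.2.2.const_smul c⟩

namespace InDirichletDomain

lemma inFormDomain (hV : Continuous V) (hu : InDirichletDomain L u) : InFormDomain V u := by
  refine ⟨hu.1, hu.2.2.1, hu.2.2.2, ?_⟩
  have hcont := hu.1.continuous
  refine Continuous.integrable_of_hasCompactSupport (by fun_prop)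
    (HasCompactSupport.intro (isCompact_Icc (a := -L) (b := L)) fun x hx => ?_)
  have hx : L ≤ |x| := le_of_not_gt fun h => hx (abs_le.1 h.le)
  simp [hu.2.1 x hx]

lemma deriv_eq_zero (hu : InDirichletDomain L u) {x : ℝ} (hx : L ≤ |x|) : deriv u x = 0 := by
  have hd := (hu.1 x).hasDerivAt
  rcases le_abs'.1 hx with h | h
  · have h0 : HasDerivWithinAt u 0 (Iic x) x := (hasDerivWithinAt_const x _ 0).congr
      (fun y hy => hu.2.1 y (le_abs'.2 (.inl (le_trans hy h)))) (hu.2.1 x hx)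
    exact (uniqueDiffOn_Iic x x self_mem_Iic).eq_deriv _ hd.hasDerivWithinAt h0
  · have h0 : HasDerivWithinAt u 0 (Ici x) x := (hasDerivWithinAt_const x _ 0).congr
      (fun y hy => hu.2.1 y (le_abs'.2 (.inr (le_trans h hy)))) (hu.2.1 x hx)
    exact (uniqueDiffOn_Ici x x self_mem_Ici).eq_deriv _ hd.hasDerivWithinAt h0

end InDirichletDomain

lemma exists_schForm_le_mul (hV : Continuous V) {W : Submodule ℂ (ℝ → ℂ)} [FiniteDimensional ℂ W]
    (hW : ∀ u ∈ W, InFormDomain V u) : ∃ C, ∀ u ∈ W, schForm V u ≤ C * ∫ x, ‖u x‖ ^ 2 := by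
  let D : W →ₗ[ℂ] ℝ → ℂ :=
    { toFun := fun u => deriv u
      map_add' := fun u v => funext fun x => deriv_add ((hW u u.2).1 x) ((hW v v.2).1 x)
      map_smul' := fun c u => funext fun x => deriv_const_smul c ((hW u u.2).1 x) }
  let M : W →ₗ[ℂ] ℝ → ℂ := LinearMap.mulLeft ℂ (fun x => (√|V x| : ℂ)) ∘ₗ W.subtype
  have hM_sq : ∀ (u : W) x, ‖M u x‖ ^ 2 = |V x| * ‖(u : ℝ → ℂ) x‖ ^ 2 := fun u x => by
    simp [M, mul_pow]
  have hM : ∀ u : W, MemLp (M u) 2 := by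
    intro u
    have hcont := (hW u u.2).1.continuous
    have hcontM : Continuous (M u) := by
      change Continuous fun x => ((√|V x| : ℝ) : ℂ) * (u : ℝ → ℂ) x
      fun_prop
    refine (memLp_two_iff_integrable_sq_norm hcontM.aestronglyMeasurable).2 ?_
    refine (hW u u.2).2.2.2.norm.congr (.of_forall fun x => ?_)
    simp [hM_sq]
  have hinj : ∀ u : W, ∫ x, ‖W.subtype u x‖ ^ 2 = 0 → u = 0 := fun u hu =>
    Subtype.ext ((hW u u.2).eq_zero_of_integral_eq_zero hu)
  obtain ⟨C, hC⟩ := exists_integral_norm_sq_le D W.subtype (fun u => (hW u u.2).2.2.1)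
    (fun u => (hW u u.2).2.1) hinj
  obtain ⟨C', hC'⟩ := exists_integral_norm_sq_le M W.subtype hM (fun u => (hW u u.2).2.1) hinj
  refine ⟨C + C', fun u hu => ?_⟩
  calc schForm V u ≤ ∫ x, (‖D ⟨u, hu⟩ x‖ ^ 2 + ‖M ⟨u, hu⟩ x‖ ^ 2) := by
        refine integral_mono (hW u hu).integrable_form
          ((integrable_norm_sq (hW u hu).2.2.1).add (integrable_norm_sq (hM ⟨u, hu⟩)))
          fun x => ?_
        simp only [hM_sq]
        exact add_le_add le_rfl (mul_le_mul_of_nonneg_right (le_abs_self _) (sq_nonneg _))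
    _ = (∫ x, ‖D ⟨u, hu⟩ x‖ ^ 2) + ∫ x, ‖M ⟨u, hu⟩ x‖ ^ 2 :=
        integral_add (integrable_norm_sq (hW u hu).2.2.1) (integrable_norm_sq (hM ⟨u, hu⟩))
    _ ≤ (C + C') * ∫ x, ‖u x‖ ^ 2 := by
        rw [add_mul]
        exact add_le_add (hC ⟨u, hu⟩) (hC' ⟨u, hu⟩)

section DisjointSupport

variable {ι : Type*} {u : ι → ℝ → ℂ}

lemma norm_sum_smul_sq_of_pairwise_disjoint_support [Fintype ι]
    (hdisj : Pairwise fun i j => Disjoint (Function.support (u i)) (Function.support (u j)))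
    (c : ι → ℂ) (x : ℝ) : ‖∑ i, c i • u i x‖ ^ 2 = ∑ i, ‖c i‖ ^ 2 * ‖u i x‖ ^ 2 := by
  simp_rw [← mul_pow, ← norm_smul]
  refine norm_sum_sq_of_pairwise_disjoint_support (f := fun i => c i • u i) (fun i j hij => ?_) x
  exact (hdisj hij).mono (Function.support_const_smul_subset _ _)
    (Function.support_const_smul_subset _ _)

lemma integral_norm_sum_smul_sq [Fintype ι] (hu : ∀ i, MemLp (u i) 2)
    (hdisj : Pairwise fun i j => Disjoint (Function.support (u i)) (Function.support (u j)))
    (c : ι → ℂ) :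
    ∫ x, ‖(∑ i, c i • u i) x‖ ^ 2 = ∑ i, ‖c i‖ ^ 2 * ∫ x, ‖u i x‖ ^ 2 := by
  simp_rw [← integral_const_mul]
  rw [← integral_finsetSum _ fun i _ => (integrable_norm_sq (hu i)).const_mul _]
  refine integral_congr_ae (.of_forall fun x => ?_)
  simp only [Finset.sum_apply, Pi.smul_apply]
  exact norm_sum_smul_sq_of_pairwise_disjoint_support hdisj c x

lemma schForm_sum_smul [Fintype ι] (hu : ∀ i, InFormDomain V (u i))
    (hdisj : Pairwise fun i j => Disjoint (Function.support (u i)) (Function.support (u j)))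
    (c : ι → ℂ) : schForm V (∑ i, c i • u i) = ∑ i, ‖c i‖ ^ 2 * schForm V (u i) := by
  simp only [schForm, ← integral_const_mul]
  rw [← integral_finsetSum _ fun i _ => (hu i).integrable_form.const_mul _]
  refine integral_congr_ae (.of_forall fun x => ?_)
  have hderiv : deriv (∑ i, c i • u i) x = ∑ i, c i • deriv (u i) x := by
    rw [deriv_sum fun i _ => ((hu i).1 x).const_smul (c i)]
    exact Finset.sum_congr rfl fun i _ => deriv_const_smul (c i) ((hu i).1 x)
  simp only [hderiv, Finset.sum_apply, Pi.smul_apply]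
  rw [norm_sum_smul_sq_of_pairwise_disjoint_support hdisj,
    norm_sum_smul_sq_of_pairwise_disjoint_support
      fun i j hij => disjoint_support_deriv (hdisj hij),
    Finset.mul_sum, ← Finset.sum_add_distrib]
  exact Finset.sum_congr rfl fun i _ => by ring

lemma schForm_le_of_mem_span_range [Finite ι] {μ : ℝ} (hu : ∀ i, InFormDomain V (u i))
    (hdisj : Pairwise fun i j => Disjoint (Function.support (u i)) (Function.support (u j)))
    (hμ : ∀ i, schForm V (u i) ≤ μ * ∫ x, ‖u i x‖ ^ 2) {w : ℝ → ℂ}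
    (hw : w ∈ Submodule.span ℂ (range u)) : schForm V w ≤ μ * ∫ x, ‖w x‖ ^ 2 := by
  have := Fintype.ofFinite ι
  obtain ⟨c, rfl⟩ := (Submodule.mem_span_range_iff_exists_fun ℂ).1 hw
  rw [schForm_sum_smul hu hdisj, integral_norm_sum_smul_sq (fun i => (hu i).2.1) hdisj,
    Finset.mul_sum]
  refine Finset.sum_le_sum fun i _ => ?_
  rw [mul_left_comm]
  exact mul_le_mul_of_nonneg_left (hμ i) (sq_nonneg _)

end DisjointSupport

lemma inDirichletDomain_of_contDiff (hu : ContDiff ℝ 1 u) (h0 : ∀ x, L ≤ |x| → u x = 0) :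
    InDirichletDomain L u := by
  have hsupp : HasCompactSupport u := HasCompactSupport.intro (isCompact_Icc (a := -L) (b := L))
    fun x hx => h0 x (le_of_not_gt fun h => hx (abs_le.1 h.le))
  exact ⟨hu.differentiable one_ne_zero, h0, hu.continuous.memLp_of_hasCompactSupport hsupp,
    (hu.continuous_deriv le_rfl).memLp_of_hasCompactSupport hsupp.deriv⟩

lemma exists_submodule_inDirichletDomain (hL : 0 < L) (j : ℕ) :
    ∃ W : Submodule ℂ (ℝ → ℂ), (∀ u ∈ W, InDirichletDomain L u) ∧ Module.finrank ℂ W = j := by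
  let t : ℕ → ℝ := fun k => k * (L / j)
  have ht : Monotone t := fun i k hik => by
    simp only [t]
    gcongr
  choose f hf_supp hf_smooth _ using fun k : Fin j =>
    (isOpen_Ioo (a := t k) (b := t (k + 1))).exists_contDiff_support_eq (n := 1)
  let u : Fin j → ℝ → ℂ := fun k x => f k x
  have hu_supp : ∀ k, Function.support (u k) = Ioo (t k) (t (k + 1)) := fun k => by
    rw [← hf_supp k]
    ext x
    simp [u]
  have hdir : ∀ k, InDirichletDomain L (u k) := fun k => by
    refine inDirichletDomain_of_contDiff (Complex.ofRealCLM.contDiff.comp (hf_smooth k))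
      fun x hx => Function.notMem_support.1 fun hxu => hx.not_gt ?_
    rw [hu_supp k] at hxu
    have hj : (j : ℝ) ≠ 0 := by exact_mod_cast k.pos.ne'
    have h0 : 0 ≤ t k := by positivity
    have hkL : t (k + 1) ≤ L := (ht k.2).trans_eq (mul_div_cancel₀ L hj)
    exact abs_lt.2 ⟨by linarith [hxu.1], by linarith [hxu.2]⟩
  have hne : ∀ k, u k ≠ 0 := fun k => by
    have : 0 < L / j := div_pos hL (by exact_mod_cast k.pos)
    rw [← Function.support_nonempty_iff, hu_supp, nonempty_Ioo]
    simp only [t]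
    push_cast
    linarith
  have hdisj := pairwise_disjoint_support_of_monotoneOn (ht.monotoneOn _) fun k => (hu_supp k).le
  refine ⟨Submodule.span ℂ (range u), fun v hv => ?_, ?_⟩
  · exact Submodule.span_le (p := dirichletSubmodule L).2 (range_subset_iff.2 hdir) hv
  · rw [finrank_span_eq_card (linearIndependent_of_pairwise_disjoint_support hdisj hne),
      Fintype.card_fin]

end Form

section MinMax

variable {V : ℝ → ℝ} {P : (ℝ → ℂ) → Prop} {j : ℕ}

lemma bddAbove_rayleigh (hV : Continuous V) {W : Submodule ℂ (ℝ → ℂ)} [FiniteDimensional ℂ W]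
    (hW : ∀ u ∈ W, InFormDomain V u) :
    BddAbove {q : ℝ | ∃ u ∈ W, u ≠ 0 ∧ q = schForm V u / ∫ x, ‖u x‖ ^ 2} := by
  obtain ⟨C, hC⟩ := exists_schForm_le_mul hV hW
  refine ⟨C, ?_⟩
  rintro _ ⟨u, hu, hne, rfl⟩
  exact (div_le_iff₀ ((hW u hu).integral_norm_sq_pos hne)).2 (hC u hu)

lemma le_minmax (hV : Continuous V) (hP : ∀ u, P u → InFormDomain V u) (hj : 1 ≤ j)
    (hne : ∃ W : Submodule ℂ (ℝ → ℂ), (∀ u ∈ W, P u) ∧ Module.finrank ℂ W = j) {μ : ℝ}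
    (hμ : ∀ W : Submodule ℂ (ℝ → ℂ), (∀ u ∈ W, P u) → Module.finrank ℂ W = j →
      ∃ u ∈ W, u ≠ 0 ∧ μ * ∫ x, ‖u x‖ ^ 2 ≤ schForm V u) :
    μ ≤ minmax V P j := by
  obtain ⟨W₀, hW₀, hW₀j⟩ := hne
  refine le_csInf ⟨_, W₀, hW₀, hW₀j, rfl⟩ ?_
  rintro _ ⟨W, hW, hWj, rfl⟩
  have : FiniteDimensional ℂ W := Module.finite_of_finrank_pos (by lia)
  obtain ⟨u, hu, hune, huμ⟩ := hμ W hW hWj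
  refine ((le_div_iff₀ ((hP u (hW u hu)).integral_norm_sq_pos hune)).2 huμ).trans ?_
  exact le_csSup (bddAbove_rayleigh hV fun u hu => hP u (hW u hu)) ⟨u, hu, hune, rfl⟩

lemma exists_submodule_of_minmax_lt (hV : Continuous V) (hP : ∀ u, P u → InFormDomain V u)
    (hj : 1 ≤ j) (hne : ∃ W : Submodule ℂ (ℝ → ℂ), (∀ u ∈ W, P u) ∧ Module.finrank ℂ W = j)
    {μ : ℝ} (hμ : minmax V P j < μ) :
    ∃ W : Submodule ℂ (ℝ → ℂ), (∀ u ∈ W, P u) ∧ Module.finrank ℂ W = j ∧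
      ∀ u ∈ W, schForm V u ≤ μ * ∫ x, ‖u x‖ ^ 2 := by
  obtain ⟨W₀, hW₀, hW₀j⟩ := hne
  obtain ⟨_, ⟨W, hW, hWj, rfl⟩, hlt⟩ := exists_lt_of_csInf_lt (by exact ⟨_, W₀, hW₀, hW₀j, rfl⟩) hμ
  have : FiniteDimensional ℂ W := Module.finite_of_finrank_pos (by lia)
  refine ⟨W, hW, hWj, fun u hu => ?_⟩
  rcases eq_or_ne u 0 with rfl | hune
  · simp [schForm]
  rw [← div_le_iff₀ ((hP u (hW u hu)).integral_norm_sq_pos hune)]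
  exact (le_csSup (bddAbove_rayleigh hV fun u hu => hP u (hW u hu)) ⟨u, hu, hune, rfl⟩).trans hlt.le

lemma mul_integral_le_schForm {m : ℝ} (hm : ∀ x, m ≤ V x) {u : ℝ → ℂ} (hu : InFormDomain V u) :
    m * ∫ x, ‖u x‖ ^ 2 ≤ schForm V u := by
  rw [← sub_nonneg, hu.schForm_sub]
  refine integral_nonneg fun x => ?_
  have := sub_nonneg.2 (hm x)
  positivity

lemma minmax_le (hV : Continuous V) {m : ℝ} (hm : ∀ x, m ≤ V x)
    (hP : ∀ u, P u → InFormDomain V u) (hj : 1 ≤ j) {W : Submodule ℂ (ℝ → ℂ)}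
    (hW : ∀ u ∈ W, P u) (hWj : Module.finrank ℂ W = j) {μ : ℝ}
    (hμ : ∀ u ∈ W, schForm V u ≤ μ * ∫ x, ‖u x‖ ^ 2) : minmax V P j ≤ μ := by
  have hnonzero : ∀ U : Submodule ℂ (ℝ → ℂ), Module.finrank ℂ U = j → ∃ u ∈ U, u ≠ 0 :=
    fun U hUj => U.exists_mem_ne_zero_of_ne_bot fun h => by
      rw [h, finrank_bot] at hUj
      lia
  refine csInf_le_of_le ⟨m, ?_⟩ ⟨W, hW, hWj, rfl⟩ (csSup_le ?_ ?_)
  · rintro _ ⟨U, hU, hUj, rfl⟩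
    have : FiniteDimensional ℂ U := Module.finite_of_finrank_pos (by lia)
    obtain ⟨u, hu, hne⟩ := hnonzero U hUj
    have hdom := hP u (hU u hu)
    refine ((le_div_iff₀ (hdom.integral_norm_sq_pos hne)).2
      (mul_integral_le_schForm hm hdom)).trans ?_
    exact le_csSup (bddAbove_rayleigh hV fun u hu => hP u (hU u hu)) ⟨u, hu, hne, rfl⟩
  · obtain ⟨u, hu, hne⟩ := hnonzero W hWj
    exact ⟨_, u, hu, hne, rfl⟩
  · rintro _ ⟨u, hu, hne, rfl⟩
    exact (div_le_iff₀ ((hP u (hW u hu)).integral_norm_sq_pos hne)).2 (hμ u hu)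

end MinMax

lemma integral_nonneg_of_deriv_le {φ G : ℝ → ℝ} {a b : ℝ} (hφ : Integrable φ) (hab : a ≤ b)
    (hG : ∀ x ∈ Icc a b, ∃ d, HasDerivAt G d x ∧ d ≤ φ x) (hGab : G a ≤ G b)
    (hnonneg : ∀ x ∉ Icc a b, 0 ≤ φ x) : 0 ≤ ∫ x, φ x := by
  choose! d hd hd_le using hG
  have hinside := intervalIntegral.sub_le_integral_of_hasDeriv_right_of_le hab
    (fun x hx => (hd x hx).continuousAt.continuousWithinAt)
    (fun x hx => (hd x (Ioo_subset_Icc_self hx)).hasDerivWithinAt) hφ.integrableOn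
    fun x hx => hd_le x (Ioo_subset_Icc_self hx)
  rw [intervalIntegral.integral_of_le hab, ← integral_Icc_eq_integral_Ioc] at hinside
  have houtside : 0 ≤ ∫ x in (Icc a b)ᶜ, φ x :=
    setIntegral_nonneg measurableSet_Icc.compl hnonneg
  rw [← integral_add_compl measurableSet_Icc hφ (s := Icc a b)]
  linarith

section Picone

variable {V q θ : ℝ → ℝ} {u : ℝ → ℂ} {L x : ℝ} {j : ℕ}

lemma picone_identity_le (u v : ℂ) (g q : ℝ) :
    2 * inner ℝ u v * g + ‖u‖ ^ 2 * (q - g ^ 2) ≤ ‖v‖ ^ 2 + q * ‖u‖ ^ 2 := by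
  have h : 0 ≤ ‖v - g • u‖ ^ 2 := sq_nonneg _
  rw [norm_sub_sq_real, inner_smul_right, norm_smul, real_inner_comm, mul_pow, Real.norm_eq_abs,
    sq_abs] at h
  linarith

lemma exists_hasDerivAt_mul_cot_of_ne (hu : DifferentiableAt ℝ u x)
    (hθ : HasDerivAt θ (pruferField q x (θ x)) x) (hsin : Real.sin (θ x) ≠ 0) :
    ∃ d, HasDerivAt (fun x => ‖u x‖ ^ 2 * (Real.cos (θ x) / Real.sin (θ x))) d x ∧
      d ≤ ‖deriv u x‖ ^ 2 + q x * ‖u x‖ ^ 2 := by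
  refine ⟨_, hu.hasDerivAt.norm_sq.mul (hθ.cos.div hθ.sin hsin), ?_⟩
  refine Eq.trans_le ?_
    (picone_identity_le (u x) (deriv u x) (Real.cos (θ x) / Real.sin (θ x)) (q x))
  have htrig := Real.sin_sq_add_cos_sq (θ x)
  simp only [pruferField]
  field_simp
  linear_combination
    (-‖u x‖ ^ 2 * (Real.cos (θ x) ^ 2 - q x * Real.sin (θ x) ^ 2)) * htrig

lemma hasDerivAt_mul_cot_of_eq_zero (hu : DifferentiableAt ℝ u x)
    (hθ : HasDerivAt θ (pruferField q x (θ x)) x) (hsin : Real.sin (θ x) = 0) (hux : u x = 0) :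
    HasDerivAt (fun x => ‖u x‖ ^ 2 * (Real.cos (θ x) / Real.sin (θ x))) (‖deriv u x‖ ^ 2) x := by
  have hcos_sq : Real.cos (θ x) ^ 2 = 1 := by simpa [hsin] using Real.sin_sq_add_cos_sq (θ x)
  have hcos : Real.cos (θ x) ≠ 0 := fun h => by simp [h] at hcos_sq
  have hsin_deriv : HasDerivAt (fun x => Real.sin (θ x)) (Real.cos (θ x)) x :=
    hθ.sin.congr_deriv (by simp [pruferField, hsin, hcos_sq])
  have hquot := ((hasDerivAt_iff_tendsto_slope.1 hu.hasDerivAt).norm.pow 2).mul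
    ((hθ.cos.continuousAt.tendsto.mono_left nhdsWithin_le_nhds).div
      (hasDerivAt_iff_tendsto_slope.1 hsin_deriv) hcos)
  rw [div_self hcos, mul_one] at hquot
  refine hasDerivAt_iff_tendsto_slope.2 (hquot.congr' ?_)
  filter_upwards [self_mem_nhdsWithin] with y hy
  have hyx : y - x ≠ 0 := sub_ne_zero.2 hy
  simp only [slope, vsub_eq_sub, hux, hsin, sub_zero, smul_eq_mul, norm_smul, norm_zero,
    Pi.div_apply, Real.norm_eq_abs, mul_pow, sq_abs]
  rcases eq_or_ne (Real.sin (θ y)) 0 with hsy | hsy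
  · simp [hsy]
  · field_simp
    ring

lemma IsPruferAngle.exists_eq_int_mul_pi {a b : ℝ} (hθ : IsPruferAngle q a b θ) (ha : θ a = 0)
    (hb : θ b ≤ j * Real.pi) (hx : x ∈ Ioo a b) (hsin : Real.sin (θ x) = 0) :
    ∃ n ∈ Finset.Ioo (0 : ℤ) j, θ x = n * Real.pi := by
  obtain ⟨n, hn⟩ := Real.sin_eq_zero_iff.1 hsin
  have hpos : ((0 : ℤ) : ℝ) * Real.pi < θ x :=
    (hθ.mono le_rfl hx.2.le).int_mul_pi_lt hx.1 (by simp [ha])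
  have hlt : θ x < ((j : ℤ) : ℝ) * Real.pi := lt_of_not_ge fun h =>
    hb.not_gt (by exact_mod_cast (hθ.mono hx.1.le le_rfl).int_mul_pi_lt hx.2 h)
  rw [← hn] at hpos hlt
  refine ⟨n, Finset.mem_Ioo.2 ⟨?_, ?_⟩, hn.symm⟩
  · exact_mod_cast lt_of_mul_lt_mul_right hpos Real.pi_pos.le
  · exact_mod_cast lt_of_mul_lt_mul_right hlt Real.pi_pos.le

lemma IsPruferAngle.exists_finset_zeros {a b : ℝ} (hθ : IsPruferAngle q a b θ) (ha : θ a = 0)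
    (hb : θ b ≤ j * Real.pi) (hj : 1 ≤ j) :
    ∃ S : Finset ℝ, S.card < j ∧ ∀ x ∈ Ioo a b, Real.sin (θ x) = 0 → x ∈ S := by
  let node : ℤ → ℝ := fun n => Function.invFunOn θ (Icc a b) (n * Real.pi)
  refine ⟨(Finset.Ioo (0 : ℤ) j).image node, ?_, fun x hx hsin => ?_⟩
  · refine Finset.card_image_le.trans_lt ?_
    rw [Int.card_Ioo]
    lia
  · obtain ⟨n, hn, hxn⟩ := hθ.exists_eq_int_mul_pi ha hb hx hsin
    have hx' := Ioo_subset_Icc_self hx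
    have hex : ∃ y ∈ Icc a b, θ y = n * Real.pi := ⟨x, hx', hxn⟩
    have hnode_mem : node n ∈ Icc a b := Function.invFunOn_mem hex
    have hnode : θ (node n) = n * Real.pi := Function.invFunOn_eq hex
    refine Finset.mem_image.2 ⟨n, hn, le_antisymm ?_ ?_⟩
    · exact hθ.le_of_le_int_mul_pi hnode_mem hx' hnode.le hxn.ge
    · exact hθ.le_of_le_int_mul_pi hx' hnode_mem hxn.le hnode.ge

lemma mul_integral_le_schForm_of_isPruferAngle (hV : Continuous V) {μ : ℝ} (hL : 0 ≤ L)
    (hθ : IsPruferAngle (fun x => V x - μ) (-L) L θ) (hu : InDirichletDomain L u)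
    (hzero : ∀ x ∈ Ioo (-L) L, Real.sin (θ x) = 0 → u x = 0) :
    μ * ∫ x, ‖u x‖ ^ 2 ≤ schForm V u := by
  have hdom := hu.inFormDomain hV
  have hL0 : u L = 0 := hu.2.1 L (le_abs_self L)
  have hL0' : u (-L) = 0 := hu.2.1 (-L) ((le_abs_self L).trans_eq (abs_neg L).symm)
  rw [← sub_nonneg, hdom.schForm_sub]
  refine integral_nonneg_of_deriv_le (hdom.integrable_form_sub μ) (a := -L) (b := L) (by linarith)
    (G := fun x => ‖u x‖ ^ 2 * (Real.cos (θ x) / Real.sin (θ x))) (fun x hx => ?_)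
    (by simp [hL0, hL0']) fun x hx => ?_
  · by_cases hsin : Real.sin (θ x) = 0
    · have hux : u x = 0 := by
        by_cases hxL : L ≤ |x|
        · exact hu.2.1 x hxL
        · exact hzero x (abs_lt.1 (not_le.1 hxL)) hsin
      exact ⟨_, hasDerivAt_mul_cot_of_eq_zero (hu.1 x) (hθ x hx) hsin hux, by simp [hux]⟩
    · exact exists_hasDerivAt_mul_cot_of_ne (hu.1 x) (hθ x hx) hsin
  · rw [hu.2.1 x (le_of_not_gt fun h => hx (abs_le.1 h.le))]
    simp

lemma le_minmax_of_isPruferAngle_le (hV : Continuous V) {μ : ℝ} (hL : 0 < L) (hj : 1 ≤ j)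
    (hθ : IsPruferAngle (fun x => V x - μ) (-L) L θ) (h0 : θ (-L) = 0)
    (hθL : θ L ≤ j * Real.pi) : μ ≤ minmax V (InDirichletDomain L) j := by
  obtain ⟨S, hSj, hS⟩ := hθ.exists_finset_zeros h0 hθL hj
  refine le_minmax hV (fun u => InDirichletDomain.inFormDomain hV) hj
    (exists_submodule_inDirichletDomain hL j) fun W hW hWj => ?_
  obtain ⟨u, hu, hne, huS⟩ := exists_ne_zero_forall_eq_zero (hSj.trans_eq hWj.symm)
  exact ⟨u, hu, hne, mul_integral_le_schForm_of_isPruferAngle hV hL.le hθ (hW u hu)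
    fun x hx hsin => huS x (hS x hx hsin)⟩

end Picone

section ZeroExtension

variable {E : Type*} [NormedAddCommGroup E] [NormedSpace ℝ E] {a b : ℝ} {f f' : ℝ → E}

lemma hasDerivAt_indicator_Icc (hf : ∀ x ∈ Icc a b, HasDerivAt f (f' x) x) (ha : f a = 0)
    (hb : f b = 0) (ha' : f' a = 0) (hb' : f' b = 0) (x : ℝ) :
    HasDerivAt ((Icc a b).indicator f) ((Icc a b).indicator f' x) x := by
  by_cases hx : x ∈ Icc a b
  swap
  · rw [indicator_of_notMem hx]
    refine (hasDerivAt_const x 0).congr_of_eventuallyEq ?_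
    filter_upwards [isClosed_Icc.isOpen_compl.mem_nhds hx] with y hy using indicator_of_notMem hy f
  rw [indicator_of_mem hx]
  by_cases hx_end : f x = 0 ∧ f' x = 0
  · have hfx := hf x hx
    rw [hx_end.2, hasDerivAt_iff_isLittleO] at hfx ⊢
    simp only [hx_end.1, smul_zero, sub_zero, indicator_of_mem hx] at hfx ⊢
    exact (Asymptotics.isBigO_of_le _ fun y => norm_indicator_le_norm_self f y).trans_isLittleO hfx
  · have hxa : x ≠ a := fun h => hx_end (h ▸ ⟨ha, ha'⟩)
    have hxb : x ≠ b := fun h => hx_end (h ▸ ⟨hb, hb'⟩)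
    refine (hf x hx).congr_of_eventuallyEq ?_
    filter_upwards [Icc_mem_nhds (hx.1.lt_of_ne' hxa) (hx.2.lt_of_ne hxb)] with y hy
      using indicator_of_mem hy f

lemma contDiff_indicator_Icc (hf : ∀ x ∈ Icc a b, HasDerivAt f (f' x) x)
    (hf' : ContinuousOn f' (Icc a b)) (ha : f a = 0) (hb : f b = 0) (ha' : f' a = 0)
    (hb' : f' b = 0) : ContDiff ℝ 1 ((Icc a b).indicator f) := by
  have hderiv := hasDerivAt_indicator_Icc hf ha hb ha' hb'
  refine contDiff_one_iff_deriv.2 ⟨fun x => (hderiv x).differentiableAt, ?_⟩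
  rw [funext fun x => (hderiv x).deriv]
  refine continuous_indicator (fun x hx => ?_) (by rwa [isClosed_Icc.closure_eq])
  have hmem := isClosed_Icc.frontier_subset hx
  rw [frontier_Icc (hmem.1.trans hmem.2)] at hx
  rcases hx with rfl | rfl
  exacts [ha', hb']

end ZeroExtension

section Nodal

variable {a b : ℝ}

/-- A regularization of `|t|` that vanishes together with its derivative at `0`: composing it with
a function that vanishes at the ends of an interval allows a differentiable extension by zero. -/
noncomputable def softAbs (ε t : ℝ) : ℝ := √(t ^ 2 + ε ^ 2) - ε

variable {ε : ℝ}

lemma hasDerivAt_softAbs (hε : 0 < ε) (t : ℝ) :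
    HasDerivAt (softAbs ε) (t / √(t ^ 2 + ε ^ 2)) t := by
  have hpos : t ^ 2 + ε ^ 2 ≠ 0 := by positivity
  refine (((hasDerivAt_pow 2 t).add_const (ε ^ 2)).sqrt hpos).sub_const ε |>.congr_deriv ?_
  norm_num
  field_simp

lemma softAbs_zero (hε : 0 < ε) : softAbs ε 0 = 0 := by
  simp [softAbs, Real.sqrt_sq hε.le]

lemma softAbs_nonneg (ε t : ℝ) : 0 ≤ softAbs ε t :=
  sub_nonneg.2 (Real.le_sqrt_of_sq_le (by nlinarith))

lemma softAbs_sq_add (ε t : ℝ) : softAbs ε t ^ 2 + 2 * ε * softAbs ε t = t ^ 2 := by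
  have hsqrt := Real.sq_sqrt (show 0 ≤ t ^ 2 + ε ^ 2 by positivity)
  rw [softAbs]
  linear_combination hsqrt

lemma softAbs_le_abs (hε : 0 < ε) (t : ℝ) : softAbs ε t ≤ |t| := by
  have hsq := softAbs_sq_add ε t
  have hnonneg := softAbs_nonneg ε t
  exact abs_le_of_sq_le_sq' (by rw [sq_abs]; nlinarith) (abs_nonneg t) |>.2

lemma softAbs_eq_zero_iff (hε : 0 < ε) {t : ℝ} : softAbs ε t = 0 ↔ t = 0 :=
  ⟨fun h => by simpa [h] using (softAbs_sq_add ε t).symm, fun h => h ▸ softAbs_zero hε⟩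

lemma div_sqrt_sq_add_sq_sq_le_one (ε t : ℝ) : (t / √(t ^ 2 + ε ^ 2)) ^ 2 ≤ 1 := by
  rw [div_pow, Real.sq_sqrt (by positivity)]
  exact div_le_one_of_le₀ (by nlinarith [sq_nonneg ε]) (by positivity)

/-- The trial function attached to a function `y` that vanishes at `a` and `b`: a regularization
of `|y|` on `[a, b]`, extended by zero. -/
noncomputable def nodalTrial (ε a b : ℝ) (y : ℝ → ℝ) : ℝ → ℂ :=
  (Icc a b).indicator fun x => (softAbs ε (y x) : ℂ)

variable {V y z : ℝ → ℝ}

lemma support_nodalTrial_subset (hε : 0 < ε) (hya : y a = 0) (hyb : y b = 0) :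
    Function.support (nodalTrial ε a b y) ⊆ Ioo a b := by
  intro x hx
  have hmem : x ∈ Icc a b := support_indicator_subset hx
  rw [Function.mem_support, nodalTrial, indicator_of_mem hmem] at hx
  have hyx : y x ≠ 0 := fun h => hx (by simp [h, softAbs_zero hε])
  exact ⟨hmem.1.lt_of_ne (fun h => hyx (h ▸ hya)), hmem.2.lt_of_ne (fun h => hyx (h ▸ hyb))⟩

lemma hasDerivAt_nodalTrial (hε : 0 < ε) (hy : ∀ x ∈ Icc a b, HasDerivAt y (z x) x)
    (hya : y a = 0) (hyb : y b = 0) (x : ℝ) :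
    HasDerivAt (nodalTrial ε a b y)
      ((Icc a b).indicator (fun x => ((y x / √(y x ^ 2 + ε ^ 2) * z x : ℝ) : ℂ)) x) x :=
  hasDerivAt_indicator_Icc
    (fun x hx => ((hasDerivAt_softAbs hε (y x)).comp x (hy x hx)).ofReal_comp)
    (by simp [hya, softAbs_zero hε]) (by simp [hyb, softAbs_zero hε]) (by simp [hya])
    (by simp [hyb]) x

lemma deriv_nodalTrial_eq_zero (hε : 0 < ε) (hy : ∀ x ∈ Icc a b, HasDerivAt y (z x) x)
    (hya : y a = 0) (hyb : y b = 0) {x : ℝ} (hx : x ∉ Ioo a b) :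
    deriv (nodalTrial ε a b y) x = 0 := by
  rw [(hasDerivAt_nodalTrial hε hy hya hyb x).deriv, indicator_apply_eq_zero]
  intro hmem
  obtain rfl | rfl :=
    (eq_endpoints_or_mem_Ioo_of_mem_Icc hmem).imp_right fun h => h.resolve_right hx
  · simp [hya]
  · simp [hyb]

lemma inDirichletDomain_nodalTrial {L : ℝ} (hε : 0 < ε)
    (hy : ∀ x ∈ Icc a b, HasDerivAt y (z x) x) (hz : ContinuousOn z (Icc a b)) (hya : y a = 0)
    (hyb : y b = 0) (hLa : -L ≤ a) (hbL : b ≤ L) :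
    InDirichletDomain L (nodalTrial ε a b y) := by
  have hy_cont : ContinuousOn y (Icc a b) := fun x hx => (hy x hx).continuousAt.continuousWithinAt
  have hsqrt : ∀ x, √(y x ^ 2 + ε ^ 2) ≠ 0 := fun x => by positivity
  refine inDirichletDomain_of_contDiff (contDiff_indicator_Icc
    (fun x hx => ((hasDerivAt_softAbs hε (y x)).comp x (hy x hx)).ofReal_comp)
    (Complex.continuous_ofReal.comp_continuousOn
      ((hy_cont.div (by fun_prop) fun x _ => hsqrt x).mul hz))
    (by simp [hya, softAbs_zero hε]) (by simp [hyb, softAbs_zero hε]) (by simp [hya])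
    (by simp [hyb])) fun x hx => ?_
  refine Function.notMem_support.1 fun hxu => hx.not_gt ?_
  have hmem := support_nodalTrial_subset hε hya hyb hxu
  exact abs_lt.2 ⟨hLa.trans_lt hmem.1, hmem.2.trans_le hbL⟩

lemma nodalTrial_ne_zero (hε : 0 < ε) {c : ℝ} (hc : c ∈ Icc a b) (hyc : y c ≠ 0) :
    nodalTrial ε a b y ≠ 0 := fun h => by
  have hzero := congrFun h c
  rw [nodalTrial, indicator_of_mem hc, Pi.zero_apply, Complex.ofReal_eq_zero,
    softAbs_eq_zero_iff hε] at hzero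
  exact hyc hzero

lemma integral_energy_eq_zero {q : ℝ → ℝ} (hq : Continuous q) (hab : a ≤ b)
    (hy : ∀ x ∈ Icc a b, HasDerivAt y (z x) x)
    (hz : ∀ x ∈ Icc a b, HasDerivAt z (q x * y x) x) (hya : y a = 0) (hyb : y b = 0) :
    ∫ x in a..b, (z x ^ 2 + q x * y x ^ 2) = 0 := by
  have hy_cont : ContinuousOn y (Icc a b) := fun x hx => (hy x hx).continuousAt.continuousWithinAt
  have hz_cont : ContinuousOn z (Icc a b) := fun x hx => (hz x hx).continuousAt.continuousWithinAt
  have hderiv : ∀ x ∈ uIcc a b, HasDerivAt (fun x => y x * z x) (z x ^ 2 + q x * y x ^ 2) x := by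
    intro x hx
    rw [uIcc_of_le hab] at hx
    exact ((hy x hx).mul (hz x hx)).congr_deriv (by ring)
  rw [intervalIntegral.integral_eq_sub_of_hasDerivAt hderiv, hya, hyb, zero_mul, zero_mul, sub_zero]
  exact ContinuousOn.intervalIntegrable_of_Icc hab (by fun_prop)

lemma nodalTrial_energy_le {K μ x : ℝ} (hε : 0 < ε) (hy : ∀ x ∈ Icc a b, HasDerivAt y (z x) x)
    (hya : y a = 0) (hyb : y b = 0) (hx : x ∈ Icc a b) (hK : |V x - μ| ≤ K) :
    ‖deriv (nodalTrial ε a b y) x‖ ^ 2 + (V x - μ) * ‖nodalTrial ε a b y x‖ ^ 2 ≤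
      z x ^ 2 + (V x - μ) * y x ^ 2 + 2 * K * ε * |y x| := by
  rw [(hasDerivAt_nodalTrial hε hy hya hyb x).deriv, nodalTrial, indicator_of_mem hx,
    indicator_of_mem hx, Complex.norm_real, Complex.norm_real, Real.norm_eq_abs, Real.norm_eq_abs,
    sq_abs, sq_abs, mul_pow]
  have hkin : (y x / √(y x ^ 2 + ε ^ 2)) ^ 2 * z x ^ 2 ≤ z x ^ 2 :=
    mul_le_of_le_one_left (sq_nonneg _) (div_sqrt_sq_add_sq_sq_le_one ε (y x))
  have hpot : -(V x - μ) * softAbs ε (y x) ≤ K * |y x| :=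
    mul_le_mul ((neg_le_abs _).trans hK) (softAbs_le_abs hε _) (softAbs_nonneg ε _)
      ((abs_nonneg _).trans hK)
  have hsq := softAbs_sq_add ε (y x)
  calc (y x / √(y x ^ 2 + ε ^ 2)) ^ 2 * z x ^ 2 + (V x - μ) * softAbs ε (y x) ^ 2
      = (y x / √(y x ^ 2 + ε ^ 2)) ^ 2 * z x ^ 2 + (V x - μ) * y x ^ 2
        + 2 * ε * (-(V x - μ) * softAbs ε (y x)) := by rw [← hsq]; ring
    _ ≤ z x ^ 2 + (V x - μ) * y x ^ 2 + 2 * ε * (K * |y x|) := by gcongr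
    _ = z x ^ 2 + (V x - μ) * y x ^ 2 + 2 * K * ε * |y x| := by ring

lemma schForm_nodalTrial_sub_le {K l μ : ℝ} (hε : 0 < ε) (hV : Continuous V) (hab : a ≤ b)
    (hy : ∀ x ∈ Icc a b, HasDerivAt y (z x) x)
    (hz : ∀ x ∈ Icc a b, HasDerivAt z ((V x - l) * y x) x) (hya : y a = 0) (hyb : y b = 0)
    (hK : ∀ x ∈ Icc a b, |V x - μ| ≤ K) :
    schForm V (nodalTrial ε a b y) - μ * ∫ x, ‖nodalTrial ε a b y x‖ ^ 2 ≤
      2 * K * ε * (∫ x in a..b, |y x|) - (μ - l) * ∫ x in a..b, y x ^ 2 := by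
  have hy_cont : ContinuousOn y (Icc a b) := fun x hx => (hy x hx).continuousAt.continuousWithinAt
  have hz_cont : ContinuousOn z (Icc a b) := fun x hx => (hz x hx).continuousAt.continuousWithinAt
  have hdom : InFormDomain V (nodalTrial ε a b y) :=
    (inDirichletDomain_nodalTrial (L := max (-a) b) hε hy hz_cont hya hyb
      (neg_le.1 (le_max_left _ _)) (le_max_right _ _)).inFormDomain hV
  have hsupp : Function.support (fun x => ‖deriv (nodalTrial ε a b y) x‖ ^ 2 +
      (V x - μ) * ‖nodalTrial ε a b y x‖ ^ 2) ⊆ Ioc a b := by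
    refine fun x hx => Ioo_subset_Ioc_self (by_contra fun hxab => hx ?_)
    have hux : nodalTrial ε a b y x = 0 :=
      Function.notMem_support.1 fun h => hxab (support_nodalTrial_subset hε hya hyb h)
    simp [hux, deriv_nodalTrial_eq_zero hε hy hya hyb hxab]
  rw [hdom.schForm_sub, ← intervalIntegral.integral_eq_integral_of_support_subset hsupp]
  have hint : ∀ f : ℝ → ℝ, ContinuousOn f (Icc a b) → IntervalIntegrable f volume a b :=
    fun f hf => hf.intervalIntegrable_of_Icc hab
  have henergy := hint (fun x => z x ^ 2 + (V x - l) * y x ^ 2) (by fun_prop)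
  have hlin := hint (fun x => 2 * K * ε * |y x|) (by fun_prop)
  have hmass := hint (fun x => (μ - l) * y x ^ 2) (by fun_prop)
  calc ∫ x in a..b, (‖deriv (nodalTrial ε a b y) x‖ ^ 2 + (V x - μ) * ‖nodalTrial ε a b y x‖ ^ 2)
      ≤ ∫ x in a..b, (z x ^ 2 + (V x - l) * y x ^ 2 + (2 * K * ε * |y x| - (μ - l) * y x ^ 2)) := by
        refine intervalIntegral.integral_mono_on hab
          (hdom.integrable_form_sub μ).intervalIntegrable (henergy.add (hlin.sub hmass)) ?_
        intro x hx
        refine (nodalTrial_energy_le hε hy hya hyb hx (hK x hx)).trans_eq (by ring)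
    _ = 2 * K * ε * (∫ x in a..b, |y x|) - (μ - l) * ∫ x in a..b, y x ^ 2 := by
        rw [intervalIntegral.integral_add henergy (hlin.sub hmass),
          intervalIntegral.integral_sub hlin hmass,
          integral_energy_eq_zero (q := fun x => V x - l) (by fun_prop) hab hy hz hya hyb, zero_add,
          intervalIntegral.integral_const_mul, intervalIntegral.integral_const_mul]

lemma exists_schForm_nodalTrial_le {l μ : ℝ} (hV : Continuous V) (hab : a < b)
    (hy : ∀ x ∈ Icc a b, HasDerivAt y (z x) x)
    (hz : ∀ x ∈ Icc a b, HasDerivAt z ((V x - l) * y x) x) (hya : y a = 0) (hyb : y b = 0)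
    {c : ℝ} (hc : c ∈ Icc a b) (hyc : y c ≠ 0) (hμ : l < μ) :
    ∃ ε > 0, schForm V (nodalTrial ε a b y) ≤ μ * ∫ x, ‖nodalTrial ε a b y x‖ ^ 2 := by
  have hy_cont : ContinuousOn y (Icc a b) := fun x hx => (hy x hx).continuousAt.continuousWithinAt
  obtain ⟨K, hK⟩ := (isCompact_Icc (a := a) (b := b)).exists_bound_of_continuousOn
    (f := fun x => V x - μ) (by fun_prop)
  have hK_nonneg : 0 ≤ K := (norm_nonneg _).trans (hK c hc)
  set A := ∫ x in a..b, |y x|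
  set I := ∫ x in a..b, y x ^ 2
  have hA : 0 ≤ A := intervalIntegral.integral_nonneg hab.le fun x _ => abs_nonneg (y x)
  have hI : 0 < (μ - l) * I := mul_pos (sub_pos.2 hμ) <|
    intervalIntegral.integral_pos hab (hy_cont.pow 2) (fun x _ => sq_nonneg (y x))
      ⟨c, hc, pow_pos (abs_pos.2 hyc) 2 |>.trans_eq (sq_abs _)⟩
  refine ⟨(μ - l) * I / (2 * K * A + 1), by positivity, sub_nonpos.1 ?_⟩
  refine (schForm_nodalTrial_sub_le (by positivity) hV hab.le hy hz hya hyb hK).trans ?_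
  rw [sub_nonpos, show 2 * K * ((μ - l) * I / (2 * K * A + 1)) * A =
    (μ - l) * I * (2 * K * A / (2 * K * A + 1)) by ring]
  exact mul_le_of_le_one_right hI.le (div_le_one_of_le₀ (by linarith) (by positivity))

lemma IsPruferAngle.exists_nodes {q θ : ℝ → ℝ} {n : ℕ} (hθ : IsPruferAngle q a b θ)
    (hab : a ≤ b) (ha : θ a = 0) (hb : n * Real.pi ≤ θ b) :
    ∃ t : ℕ → ℝ, MonotoneOn t (Iic n) ∧ ∀ k ≤ n, t k ∈ Icc a b ∧ θ (t k) = k * Real.pi := by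
  have hex : ∀ k ≤ n, ∃ t ∈ Icc a b, θ t = k * Real.pi := fun k hk =>
    intermediate_value_Icc hab hθ.continuousOn
      ⟨by rw [ha]; positivity, le_trans (by gcongr) hb⟩
  choose! t ht_mem ht using hex
  refine ⟨t, fun k hk l hl hkl => ?_, fun k hk => ⟨ht_mem k hk, ht k hk⟩⟩
  refine hθ.le_of_le_int_mul_pi (n := k) (ht_mem k hk) (ht_mem l hl) (by simp [ht k hk]) ?_
  rw [ht l hl]
  gcongr
  exact_mod_cast hkl

lemma IsPruferAngle.exists_trial {θ : ℝ → ℝ} {l μ L : ℝ} {k : ℕ} (hV : Continuous V)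
    (hab : a ≤ b) (hθ : IsPruferAngle (fun x => V x - l) a b θ) (ha : θ a = k * Real.pi)
    (hb : θ b = (k + 1) * Real.pi) (hμ : l < μ) (hLa : -L ≤ a) (hbL : b ≤ L) :
    ∃ u, InDirichletDomain L u ∧ u ≠ 0 ∧ Function.support u ⊆ Ioo a b ∧
      schForm V u ≤ μ * ∫ x, ‖u x‖ ^ 2 := by
  obtain ⟨r, hr, hderiv⟩ := hθ.exists_amplitude (by fun_prop) hab
  set y := fun t => r t * Real.sin (θ t)
  set z := fun t => r t * Real.cos (θ t)
  have hpi := Real.pi_pos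
  have hya : y a = 0 := by simp [y, ha]
  have hyb : y b = 0 := by simpa [y, hb] using Or.inr (Real.sin_nat_mul_pi (k + 1))
  obtain ⟨c, hc, hθc⟩ : ∃ c ∈ Icc a b, θ c = Real.pi / 2 + k * Real.pi :=
    intermediate_value_Icc hab hθ.continuousOn ⟨by linarith, by linarith⟩
  have hyc : y c ≠ 0 := by simp [y, hθc, Real.sin_add_nat_mul_pi, (hr c).ne']
  have hlt : a < b := hab.lt_of_ne fun h => by
    rw [h, hb] at ha
    linarith
  obtain ⟨ε, hε, hle⟩ := exists_schForm_nodalTrial_le hV hlt (fun t ht => (hderiv t ht).1)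
    (fun t ht => (hderiv t ht).2) hya hyb hc hyc hμ
  exact ⟨nodalTrial ε a b y,
    inDirichletDomain_nodalTrial hε (fun t ht => (hderiv t ht).1)
      (fun t ht => (hderiv t ht).2.continuousAt.continuousWithinAt) hya hyb hLa hbL,
    nodalTrial_ne_zero hε hc hyc, support_nodalTrial_subset hε hya hyb, hle⟩

lemma minmax_le_of_le_isPruferAngle {θ : ℝ → ℝ} {m l μ : ℝ} {j : ℕ} (hV : Continuous V)
    (hm : ∀ x, m ≤ V x) (hj : 1 ≤ j) (hab : a ≤ b)
    (hθ : IsPruferAngle (fun x => V x - l) a b θ) (ha : θ a = 0) (hb : j * Real.pi ≤ θ b)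
    (hμ : l < μ) : minmax V (InFormDomain V) j ≤ μ := by
  obtain ⟨t, ht_mono, ht⟩ := hθ.exists_nodes hab ha hb
  have htrial : ∀ k : Fin j, ∃ u, InDirichletDomain (max (-a) b) u ∧ u ≠ 0 ∧
      Function.support u ⊆ Ioo (t k) (t (k + 1)) ∧ schForm V u ≤ μ * ∫ x, ‖u x‖ ^ 2 := by
    intro k
    obtain ⟨hk_mem, hk⟩ := ht k k.2.le
    obtain ⟨hk'_mem, hk'⟩ := ht (k + 1) k.2
    exact (hθ.mono hk_mem.1 hk'_mem.2).exists_trial hV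
      (ht_mono (mem_Iic.2 k.2.le) (mem_Iic.2 k.2) k.1.le_succ) hk (by exact_mod_cast hk') hμ
      ((neg_le.1 (le_max_left _ _)).trans hk_mem.1) (hk'_mem.2.trans (le_max_right _ _))
  choose u hu hne hsupp hle using htrial
  have hdisj := pairwise_disjoint_support_of_monotoneOn ht_mono hsupp
  refine minmax_le hV hm (fun _ h => h) hj (W := Submodule.span ℂ (range u)) (fun w hw => ?_) ?_
    fun w hw => schForm_le_of_mem_span_range (fun k => (hu k).inFormDomain hV) hdisj hle hw
  · exact InDirichletDomain.inFormDomain hV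
      (Submodule.span_le (p := dirichletSubmodule (max (-a) b)).2 (range_subset_iff.2 hu) hw)
  · rw [finrank_span_eq_card (linearIndependent_of_pairwise_disjoint_support hdisj hne),
      Fintype.card_fin]

end Nodal

section DomainMonotonicity

variable {V θ : ℝ → ℝ} {L l : ℝ} {j : ℕ}

lemma le_isPruferAngle_of_minmax_le (hV : Continuous V) (hL : 0 < L) (hj : 1 ≤ j)
    (hl : minmax V (InDirichletDomain L) j ≤ l)
    (hθ : IsPruferAngle (fun x => V x - l) (-L) L θ) (h0 : θ (-L) = 0) :
    j * Real.pi ≤ θ L := by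
  by_contra! hlt
  obtain ⟨δ, hδ, hclose⟩ := hθ.exists_forall_abs_sub_lt (by fun_prop) (by linarith) (sub_pos.2 hlt)
  obtain ⟨η, hη0, hη⟩ := exists_isPruferAngle (q := fun x => V x - (l + δ)) (by fun_prop)
    (show -L ≤ L by linarith) 0
  have hηL := (abs_lt.1 (hclose _ η (fun t _ => by simp [abs_of_pos hδ]) (by rw [hη0, h0]) hη)).2
  have := le_minmax_of_isPruferAngle_le hV hL hj hη hη0 (by linarith)
  linarith

theorem minmax_inFormDomain_lt_minmax_inDirichletDomain (hV : Continuous V) {m : ℝ}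
    (hm : ∀ x, m ≤ V x) (hj : 1 ≤ j) (hL : 0 < L) :
    minmax V (InFormDomain V) j < minmax V (InDirichletDomain L) j := by
  set l := minmax V (InDirichletDomain L) j
  obtain ⟨θ, h0, hθ⟩ := exists_isPruferAngle (q := fun x => V x - l) (by fun_prop)
    (show -L ≤ L + 1 by linarith) 0
  have hθL : j * Real.pi ≤ θ L :=
    le_isPruferAngle_of_minmax_le hV hL hj le_rfl (hθ.mono le_rfl (by linarith)) h0
  have hlt : j * Real.pi < θ (L + 1) := by
    exact_mod_cast (hθ.mono (c := L) (by linarith) le_rfl).int_mul_pi_lt (n := j) (by linarith)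
      (by exact_mod_cast hθL)
  obtain ⟨δ, hδ, hclose⟩ := hθ.exists_forall_abs_sub_lt (by fun_prop) (by linarith) (sub_pos.2 hlt)
  obtain ⟨η, hη0, hη⟩ := exists_isPruferAngle (q := fun x => V x - (l - δ)) (by fun_prop)
    (show -L ≤ L + 1 by linarith) 0
  have hηL := (abs_lt.1 (hclose _ η (fun t _ => by simp [abs_of_pos hδ]) (by rw [hη0, h0]) hη)).1
  have hle : minmax V (InFormDomain V) j ≤ l - δ / 2 :=
    minmax_le_of_le_isPruferAngle hV hm hj (by linarith) hη hη0 (by linarith) (by linarith)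
  linarith

end DomainMonotonicity

section Cutoff

lemma inDirichletDomain_smul {χ : ℝ → ℝ} {u : ℝ → ℂ} {L : ℝ} (hχ : ContDiff ℝ 1 χ)
    (h0 : ∀ x, L ≤ |x| → χ x = 0) (hu : Differentiable ℝ u) (hu2 : MemLp u 2)
    (hu2' : MemLp (deriv u) 2) : InDirichletDomain L fun x => χ x • u x := by
  have hsupp : HasCompactSupport χ := HasCompactSupport.intro (isCompact_Icc (a := -L) (b := L))
    fun x hx => h0 x (le_of_not_gt fun h => hx (abs_le.1 h.le))
  have hχd : Differentiable ℝ χ := hχ.differentiable one_ne_zero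
  have hderiv : (deriv fun x => χ x • u x) = fun x => χ x • deriv u x + deriv χ x • u x :=
    funext fun x => deriv_fun_smul (hχd x) (hu x)
  have hbdd := hχ.continuous.memLp_top_of_hasCompactSupport hsupp volume
  have hbdd' := (hχ.continuous_deriv le_rfl).memLp_top_of_hasCompactSupport hsupp.deriv volume
  refine ⟨hχd.smul hu, fun x hx => by simp [h0 x hx], hu2.smul hbdd, ?_⟩
  rw [hderiv]
  exact (hu2'.smul hbdd).add (hu2.smul hbdd')

/-- `1 - cosh (k x) / cosh (k L)`: it vanishes at `±L`, is exponentially close to `1` on compact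
sets, and solves `s'' = -k² (1 - s)`. -/
noncomputable def cutoffProfile (k L x : ℝ) : ℝ := 1 - Real.cosh (k * x) / Real.cosh (k * L)

/-- The derivative of `cutoffProfile k L`. -/
noncomputable def cutoffSlope (k L x : ℝ) : ℝ := -(k * Real.sinh (k * x) / Real.cosh (k * L))

/-- The cutoff with which whole-line functions are turned into trial functions on `(-L, L)`; the
square makes its zero extension differentiable. -/
noncomputable def cutoff (k L : ℝ) : ℝ → ℝ :=
  (Icc (-L) L).indicator fun x => cutoffProfile k L x ^ 2

/-- Multiplication by `cutoff k L`. -/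
noncomputable def cutoffMap (k L : ℝ) : (ℝ → ℂ) →ₗ[ℂ] (ℝ → ℂ) :=
  LinearMap.pi fun x => cutoff k L x • LinearMap.proj x

variable {k L R K ε q l x : ℝ} {V : ℝ → ℝ} {u : ℝ → ℂ}

lemma cutoffMap_apply (k L : ℝ) (u : ℝ → ℂ) (x : ℝ) : cutoffMap k L u x = cutoff k L x • u x :=
  rfl

lemma norm_cutoffMap_sq (hx : x ∈ Icc (-L) L) :
    ‖cutoffMap k L u x‖ ^ 2 = cutoffProfile k L x ^ 4 * ‖u x‖ ^ 2 := by
  rw [cutoffMap_apply, norm_smul, mul_pow, cutoff, indicator_of_mem hx, Real.norm_eq_abs, sq_abs]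
  ring

lemma hasDerivAt_cutoffProfile (k L x : ℝ) :
    HasDerivAt (cutoffProfile k L) (cutoffSlope k L x) x := by
  refine ((((hasDerivAt_id x).const_mul k).cosh.div_const _).const_sub 1).congr_deriv ?_
  simp only [id, mul_one, mul_comm, cutoffSlope]

lemma hasDerivAt_cutoffSlope (k L x : ℝ) :
    HasDerivAt (cutoffSlope k L) (-(k ^ 2 * (1 - cutoffProfile k L x))) x := by
  refine ((((hasDerivAt_id x).const_mul k).sinh.const_mul k).div_const _).neg.congr_deriv ?_
  simp only [id, mul_one, cutoffProfile]
  ring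

lemma cutoffProfile_self (k L : ℝ) : cutoffProfile k L L = 0 := by
  rw [cutoffProfile, div_self (Real.cosh_pos _).ne', sub_self]

lemma cutoffProfile_neg_self (k L : ℝ) : cutoffProfile k L (-L) = 0 := by
  rw [cutoffProfile, mul_neg, Real.cosh_neg, div_self (Real.cosh_pos _).ne', sub_self]

lemma cutoffProfile_le_one (k L x : ℝ) : cutoffProfile k L x ≤ 1 :=
  sub_le_self _ (div_pos (Real.cosh_pos _) (Real.cosh_pos _)).le

lemma one_sub_cutoffProfile_le (k L : ℝ) (hx : |x| ≤ R) :
    1 - cutoffProfile k L x ≤ Real.cosh (k * R) / Real.cosh (k * L) := by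
  rw [cutoffProfile, sub_sub_cancel]
  refine div_le_div_of_nonneg_right (Real.cosh_le_cosh.2 ?_) (Real.cosh_pos _).le
  rw [abs_mul, abs_mul]
  exact mul_le_mul_of_nonneg_left (hx.trans (le_abs_self R)) (abs_nonneg k)

lemma cutoffProfile_nonneg (k : ℝ) (hx : x ∈ Icc (-L) L) : 0 ≤ cutoffProfile k L x := by
  have h := one_sub_cutoffProfile_le k L (abs_le.2 hx)
  rw [div_self (Real.cosh_pos _).ne'] at h
  linarith

lemma hasDerivAt_cutoffProfile_sq (k L x : ℝ) :
    HasDerivAt (fun x => cutoffProfile k L x ^ 2)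
      (2 * cutoffProfile k L x * cutoffSlope k L x) x := by
  simpa using (hasDerivAt_cutoffProfile k L x).fun_pow 2

lemma hasDerivAt_cutoff (k : ℝ) (hx : x ∈ Icc (-L) L) :
    HasDerivAt (cutoff k L)
      (2 * cutoffProfile k L x * cutoffSlope k L x) x := by
  have h := hasDerivAt_indicator_Icc (fun x _ => hasDerivAt_cutoffProfile_sq k L x)
    (a := -L) (b := L) (by simp [cutoffProfile_neg_self]) (by simp [cutoffProfile_self])
    (by simp [cutoffProfile_neg_self]) (by simp [cutoffProfile_self]) x
  rwa [indicator_of_mem hx] at h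

lemma contDiff_cutoff (k L : ℝ) : ContDiff ℝ 1 (cutoff k L) :=
  contDiff_indicator_Icc (fun x _ => hasDerivAt_cutoffProfile_sq k L x)
    (by unfold cutoffProfile cutoffSlope; fun_prop)
    (by simp [cutoffProfile_neg_self]) (by simp [cutoffProfile_self])
    (by simp [cutoffProfile_neg_self]) (by simp [cutoffProfile_self])

lemma cutoff_eq_zero (k : ℝ) (hx : L ≤ |x|) : cutoff k L x = 0 := by
  rw [cutoff, indicator_apply_eq_zero]
  intro hmem
  have h := le_antisymm (abs_le.2 hmem) hx
  rcases abs_choice x with hx' | hx'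
  · rw [show x = L by linarith, cutoffProfile_self, zero_pow two_ne_zero]
  · rw [show x = -L by linarith, cutoffProfile_neg_self, zero_pow two_ne_zero]

lemma cutoff_ne_zero (hk : k ≠ 0) (hx : |x| < L) : cutoff k L x ≠ 0 := by
  have hcosh : Real.cosh (k * x) < Real.cosh (k * L) := by
    rw [Real.cosh_lt_cosh, abs_mul, abs_mul]
    exact mul_lt_mul_of_pos_left (hx.trans_le (le_abs_self L)) (abs_pos.2 hk)
  rw [cutoff, indicator_of_mem (mem_Icc.2 (abs_le.1 hx.le)), cutoffProfile]
  exact pow_ne_zero 2 (sub_pos.2 ((div_lt_one (Real.cosh_pos _)).2 hcosh)).ne'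

lemma InFormDomain.inDirichletDomain_cutoffMap (k L : ℝ) (hu : InFormDomain V u) :
    InDirichletDomain L (cutoffMap k L u) :=
  inDirichletDomain_smul (contDiff_cutoff k L) (fun _ => cutoff_eq_zero k) hu.1 hu.2.1 hu.2.2.1

lemma exists_hasDerivAt_norm_deriv_cutoffMap_sq_le (k : ℝ) (hu : DifferentiableAt ℝ u x)
    (hx : x ∈ Icc (-L) L) :
    ∃ d, HasDerivAt (fun x => 2 * cutoffProfile k L x ^ 3 *
        cutoffSlope k L x * ‖u x‖ ^ 2) d x ∧
      ‖deriv (cutoffMap k L u) x‖ ^ 2 ≤ ‖deriv u x‖ ^ 2 + d +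
        2 * k ^ 2 * (1 - cutoffProfile k L x) * cutoffProfile k L x ^ 3 * ‖u x‖ ^ 2 := by
  set s := cutoffProfile k L x
  set s' := cutoffSlope k L x
  refine ⟨(6 * s ^ 2 * s' ^ 2 - 2 * k ^ 2 * (1 - s) * s ^ 3) * ‖u x‖ ^ 2 +
    4 * s ^ 3 * s' * inner ℝ (u x) (deriv u x), ?_, ?_⟩
  · refine (((((hasDerivAt_cutoffProfile k L x).fun_pow 3).const_mul 2).fun_mul
      (hasDerivAt_cutoffSlope k L x)).fun_mul hu.hasDerivAt.norm_sq).congr_deriv ?_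
    simp only [s, s', Nat.cast_ofNat]
    ring
  have hderiv : deriv (cutoffMap k L u) x = s ^ 2 • deriv u x + (2 * s * s') • u x := by
    have h := ((hasDerivAt_cutoff k hx).smul hu.hasDerivAt).deriv
    rwa [show cutoff k L x = s ^ 2 from indicator_of_mem hx _] at h
  have hkin : s ^ 4 * ‖deriv u x‖ ^ 2 ≤ ‖deriv u x‖ ^ 2 := mul_le_of_le_one_left (sq_nonneg _)
    (pow_le_one₀ (cutoffProfile_nonneg k hx) (cutoffProfile_le_one k L x))
  have hsq : 0 ≤ 2 * (s * s' * ‖u x‖) ^ 2 := by positivity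
  rw [hderiv, norm_add_sq_real, real_inner_smul_left, real_inner_smul_right, norm_smul, norm_smul,
    mul_pow, mul_pow, Real.norm_eq_abs, Real.norm_eq_abs, sq_abs, sq_abs, real_inner_comm]
  linarith

lemma cutoff_potential_le_of_sq_le {s : ℝ} (hs0 : 0 ≤ s) (hs1 : s ≤ 1) (hq : k ^ 2 ≤ q) :
    2 * k ^ 2 * (1 - s) * s ^ 3 + q * s ^ 4 ≤ q := by
  have hs4 : 0 ≤ 1 - s ^ 4 := sub_nonneg.2 (pow_le_one₀ hs0 hs1)
  have hs3 : 0 ≤ 1 + s + s ^ 2 - s ^ 3 := by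
    have : s ^ 3 ≤ 1 := pow_le_one₀ hs0 hs1
    have : 0 ≤ s ^ 2 := sq_nonneg s
    linarith
  have h1 := mul_le_mul_of_nonneg_right hq hs4
  have h2 : 0 ≤ k ^ 2 * ((1 - s) * (1 + s + s ^ 2 - s ^ 3)) :=
    mul_nonneg (sq_nonneg k) (mul_nonneg (sub_nonneg.2 hs1) hs3)
  linarith

lemma cutoff_potential_le_of_neg_le {s : ℝ} (hs0 : 0 ≤ s) (hs1 : s ≤ 1) (hK : 0 ≤ K)
    (hq : -K ≤ q) :
    2 * k ^ 2 * (1 - s) * s ^ 3 + q * s ^ 4 ≤ q + (4 * K + 2 * k ^ 2) * (1 - s) := by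
  have hs4 : 0 ≤ 1 - s ^ 4 := sub_nonneg.2 (pow_le_one₀ hs0 hs1)
  have hbern : 1 - s ^ 4 ≤ 4 * (1 - s) := by nlinarith [sq_nonneg (s ^ 2 - 1), sq_nonneg (s - 1)]
  have hq4 : -q * (1 - s ^ 4) ≤ K * (4 * (1 - s)) :=
    (mul_le_mul_of_nonneg_right (neg_le.1 hq) hs4).trans (mul_le_mul_of_nonneg_left hbern hK)
  have hk : 2 * k ^ 2 * (1 - s) * s ^ 3 ≤ 2 * k ^ 2 * (1 - s) :=
    mul_le_of_le_one_right (mul_nonneg (by positivity) (sub_nonneg.2 hs1)) (pow_le_one₀ hs0 hs1)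
  linarith

lemma exists_hasDerivAt_le_cutoffMap_energy (hu : DifferentiableAt ℝ u x) (hx : x ∈ Icc (-L) L)
    (hK : 0 ≤ K) (hε : (4 * K + 2 * k ^ 2) * (Real.cosh (k * R) / Real.cosh (k * L)) ≤ ε)
    (hq : -K ≤ q) (hqR : R ≤ |x| → k ^ 2 ≤ q) :
    ∃ d, HasDerivAt (fun x => -(2 * cutoffProfile k L x ^ 3 * cutoffSlope k L x * ‖u x‖ ^ 2)) d x ∧
      d ≤ ‖deriv u x‖ ^ 2 + q * ‖u x‖ ^ 2 + ε * (Icc (-R) R).indicator (fun x => ‖u x‖ ^ 2) x -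
        (‖deriv (cutoffMap k L u) x‖ ^ 2 + q * ‖cutoffMap k L u x‖ ^ 2) := by
  obtain ⟨d, hd, hle⟩ := exists_hasDerivAt_norm_deriv_cutoffMap_sq_le k hu hx
  refine ⟨-d, hd.fun_neg, ?_⟩
  rw [norm_cutoffMap_sq hx]
  have hs0 := cutoffProfile_nonneg k hx
  have hs1 := cutoffProfile_le_one k L x
  by_cases hxR : x ∈ Icc (-R) R
  · have hmass := (mul_le_mul_of_nonneg_left (one_sub_cutoffProfile_le k L (abs_le.2 hxR))
      (show 0 ≤ 4 * K + 2 * k ^ 2 by positivity)).trans hε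
    have hpot := (cutoff_potential_le_of_neg_le (k := k) hs0 hs1 hK hq).trans
      (add_le_add_right hmass q)
    have := mul_le_mul_of_nonneg_right hpot (sq_nonneg ‖u x‖)
    rw [indicator_of_mem hxR]
    linarith
  · have hpot := cutoff_potential_le_of_sq_le hs0 hs1
      (hqR (le_of_not_gt fun h => hxR (abs_le.1 h.le)))
    have := mul_le_mul_of_nonneg_right hpot (sq_nonneg ‖u x‖)
    rw [indicator_of_notMem hxR]
    linarith

lemma InFormDomain.schForm_cutoffMap_sub_le (hV : Continuous V) (hu : InFormDomain V u)
    (hL : 0 ≤ L) (hRL : R ≤ L) (hK : 0 ≤ K) (hVK : ∀ x, -K ≤ V x - l)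
    (hVR : ∀ x, R ≤ |x| → k ^ 2 ≤ V x - l)
    (hε : (4 * K + 2 * k ^ 2) * (Real.cosh (k * R) / Real.cosh (k * L)) ≤ ε) :
    schForm V (cutoffMap k L u) - l * ∫ x, ‖cutoffMap k L u x‖ ^ 2 ≤
      schForm V u - l * (∫ x, ‖u x‖ ^ 2) + ε * ∫ x in Icc (-R) R, ‖u x‖ ^ 2 := by
  have hdir := hu.inDirichletDomain_cutoffMap k L
  have hdom := hdir.inFormDomain hV
  have hmass : Integrable fun x => ε * (Icc (-R) R).indicator (fun x => ‖u x‖ ^ 2) x :=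
    ((integrable_norm_sq hu.2.1).indicator measurableSet_Icc).const_mul ε
  have hright := (hu.integrable_form_sub l).fun_add hmass
  rw [← sub_nonneg, hdom.schForm_sub, hu.schForm_sub, ← integral_indicator measurableSet_Icc,
    ← integral_const_mul, ← integral_add (hu.integrable_form_sub l) hmass,
    ← integral_sub hright (hdom.integrable_form_sub l)]
  refine integral_nonneg_of_deriv_le (hright.sub (hdom.integrable_form_sub l))
    (a := -L) (b := L) (by linarith)
    (fun x hx => exists_hasDerivAt_le_cutoffMap_energy (hu.1 x) hx hK hε (hVK x) (hVR x))
    (by simp [cutoffProfile_self, cutoffProfile_neg_self]) fun x hx => ?_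
  have hxL : L ≤ |x| := le_of_not_gt fun h => hx (abs_le.1 h.le)
  have hxR : x ∉ Icc (-R) R := fun h => hx ⟨by linarith [h.1], by linarith [h.2]⟩
  have hq : 0 ≤ V x - l := (sq_nonneg k).trans (hVR x (hRL.trans hxL))
  rw [hdir.2.1 x hxL, hdir.deriv_eq_zero hxL, indicator_of_notMem hxR]
  norm_num
  positivity

lemma setIntegral_norm_sq_le_cutoffMap (hu : InFormDomain V u) (hRL : R ≤ L)
    (hcosh : 4 * Real.cosh (k * R) ≤ Real.cosh (k * L)) :
    ∫ x in Icc (-R) R, ‖u x‖ ^ 2 ≤ 4 * ∫ x, ‖cutoffMap k L u x‖ ^ 2 := by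
  have hint := (integrable_norm_sq (hu.inDirichletDomain_cutoffMap k L).2.2.1).const_mul 4
  rw [← integral_const_mul]
  refine (setIntegral_mono_on (integrable_norm_sq hu.2.1).integrableOn hint.integrableOn
    measurableSet_Icc fun x hx => ?_).trans
    (setIntegral_le_integral hint (.of_forall fun x => by positivity))
  have hs : (3 / 4 : ℝ) ≤ cutoffProfile k L x := by
    have h := one_sub_cutoffProfile_le k L (abs_le.2 hx)
    have hg : Real.cosh (k * R) / Real.cosh (k * L) ≤ 1 / 4 :=
      (div_le_iff₀ (Real.cosh_pos _)).2 (by linarith)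
    linarith
  have hs4 : (3 / 4 : ℝ) ^ 4 ≤ cutoffProfile k L x ^ 4 := by gcongr
  rw [norm_cutoffMap_sq ⟨by linarith [hx.1], by linarith [hx.2]⟩, ← mul_assoc]
  exact le_mul_of_one_le_left (sq_nonneg _) (by linarith)

lemma InFormDomain.schForm_cutoffMap_le (hV : Continuous V) (hu : InFormDomain V u)
    (hL : 0 ≤ L) (hRL : R ≤ L) (hK : 0 ≤ K) (hVK : ∀ x, -K ≤ V x - l)
    (hVR : ∀ x, R ≤ |x| → k ^ 2 ≤ V x - l)
    (hcosh : 4 * Real.cosh (k * R) ≤ Real.cosh (k * L))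
    (hε : (4 * K + 2 * k ^ 2) * (Real.cosh (k * R) / Real.cosh (k * L)) ≤ ε)
    (hul : schForm V u ≤ l * ∫ x, ‖u x‖ ^ 2) :
    schForm V (cutoffMap k L u) ≤ (l + 4 * ε) * ∫ x, ‖cutoffMap k L u x‖ ^ 2 := by
  have hε0 : 0 ≤ ε := le_trans (by positivity) hε
  have hform := hu.schForm_cutoffMap_sub_le hV hL hRL hK hVK hVR hε
  have hmass := mul_le_mul_of_nonneg_left (setIntegral_norm_sq_le_cutoffMap hu hRL hcosh) hε0
  linarith

lemma InFormDomain.eq_zero_of_cutoffMap_eq_zero (hu : InFormDomain V u) (hk : k ≠ 0)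
    (hRL : R ≤ L) (hVR : ∀ x, R ≤ |x| → k ^ 2 ≤ V x - l)
    (hul : schForm V u ≤ l * ∫ x, ‖u x‖ ^ 2) (hzero : cutoffMap k L u = 0) : u = 0 := by
  have hinner : ∀ x, |x| < R → u x = 0 := fun x hx =>
    (smul_eq_zero.1 (congrFun hzero x)).resolve_left (cutoff_ne_zero hk (hx.trans_le hRL))
  have hle : k ^ 2 * ∫ x, ‖u x‖ ^ 2 ≤ schForm V u - l * ∫ x, ‖u x‖ ^ 2 := by
    rw [hu.schForm_sub, ← integral_const_mul]
    refine integral_mono ((integrable_norm_sq hu.2.1).const_mul _) (hu.integrable_form_sub l)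
      fun x => ?_
    rcases lt_or_ge |x| R with hx | hx
    · simp [hinner x hx]
    · have := mul_le_mul_of_nonneg_right (hVR x hx) (sq_nonneg ‖u x‖)
      have := sq_nonneg ‖deriv u x‖
      simp only
      linarith
  have hk2 : 0 < k ^ 2 := by positivity
  have hnonneg : 0 ≤ ∫ x, ‖u x‖ ^ 2 := integral_nonneg fun x => by positivity
  exact hu.eq_zero_of_integral_eq_zero (by nlinarith)

lemma minmax_inDirichletDomain_le_add (hV : Continuous V) {m : ℝ} (hm : ∀ x, m ≤ V x) {j : ℕ}
    (hj : 1 ≤ j) (hk : k ≠ 0) (hL : 0 < L) (hRL : R ≤ L) (hl : minmax V (InFormDomain V) j < l)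
    (hK : 0 ≤ K) (hVK : ∀ x, -K ≤ V x - l) (hVR : ∀ x, R ≤ |x| → k ^ 2 ≤ V x - l)
    (hcosh : 4 * Real.cosh (k * R) ≤ Real.cosh (k * L)) :
    minmax V (InDirichletDomain L) j ≤
      l + 4 * ((4 * K + 2 * k ^ 2) * (Real.cosh (k * R) / Real.cosh (k * L))) := by
  have hdir : ∀ u, InDirichletDomain L u → InFormDomain V u :=
    fun u => InDirichletDomain.inFormDomain hV
  have hne : ∃ W : Submodule ℂ (ℝ → ℂ), (∀ u ∈ W, InFormDomain V u) ∧ Module.finrank ℂ W = j :=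
    (exists_submodule_inDirichletDomain hL j).imp fun W h => ⟨fun u hu => hdir u (h.1 u hu), h.2⟩
  obtain ⟨W, hW, hWj, hWl⟩ := exists_submodule_of_minmax_lt hV (fun _ h => h) hj hne hl
  have hinj : Function.Injective ((cutoffMap k L).domRestrict W) :=
    (injective_iff_map_eq_zero _).2 fun u hu =>
      Subtype.ext ((hW u u.2).eq_zero_of_cutoffMap_eq_zero hk hRL hVR (hWl u u.2) hu)
  refine minmax_le hV hm hdir hj (W := LinearMap.range ((cutoffMap k L).domRestrict W)) ?_
    ((LinearMap.finrank_range_of_inj hinj).trans hWj) ?_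
  · rintro _ ⟨u, rfl⟩
    exact (hW u u.2).inDirichletDomain_cutoffMap k L
  · rintro _ ⟨u, rfl⟩
    exact (hW u u.2).schForm_cutoffMap_le hV hL.le hRL hK hVK hVR hcosh le_rfl (hWl u u.2)

end Cutoff

section ExponentialCloseness

variable {V : ℝ → ℝ}

lemma exists_forall_le_of_le_abs (hVinf : Tendsto V (cocompact ℝ) atTop) (M : ℝ) :
    ∃ R, ∀ x, R ≤ |x| → M ≤ V x := by
  rw [← Metric.cobounded_eq_cocompact] at hVinf
  obtain ⟨R, _, hR⟩ := (Metric.hasBasis_cobounded_compl_closedBall (0 : ℝ)).eventually_iff.1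
    (hVinf.eventually_ge_atTop M)
  refine ⟨R + 1, fun x hx => hR ?_⟩
  simp only [mem_compl_iff, Metric.mem_closedBall, dist_zero_right, Real.norm_eq_abs, not_le]
  linarith

lemma exp_div_two_le_cosh (x : ℝ) : Real.exp x / 2 ≤ Real.cosh x := by
  rw [Real.cosh_eq]
  linarith [Real.exp_pos (-x)]

lemma inv_cosh_le (x : ℝ) : (Real.cosh x)⁻¹ ≤ 2 * Real.exp (-x) := by
  rw [Real.exp_neg, ← div_eq_mul_inv, ← inv_div]
  exact inv_anti₀ (by positivity) (exp_div_two_le_cosh x)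

theorem exists_minmax_inDirichletDomain_le_add_exp (hV : Continuous V)
    (hVinf : Tendsto V (cocompact ℝ) atTop) {j : ℕ} (hj : 1 ≤ j) {k : ℝ} (hk : 0 < k) :
    ∃ c > 0, ∀ᶠ L in atTop, minmax V (InDirichletDomain L) j ≤
      minmax V (InFormDomain V) j + c * Real.exp (-(k * L)) := by
  obtain ⟨x₀, hx₀⟩ := hV.exists_forall_le hVinf
  set E := minmax V (InFormDomain V) j
  set K := |E + 1 - V x₀|
  obtain ⟨R, hR⟩ := exists_forall_le_of_le_abs hVinf (E + 1 + k ^ 2)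
  refine ⟨8 * ((4 * K + 2 * k ^ 2) * Real.cosh (k * R)), by positivity, ?_⟩
  have hcosh_atTop : Tendsto (fun L => Real.cosh (k * L)) atTop atTop :=
    tendsto_atTop_mono (fun L => exp_div_two_le_cosh (k * L))
      ((Real.tendsto_exp_atTop.comp (tendsto_id.const_mul_atTop hk)).atTop_div_const two_pos)
  filter_upwards [eventually_gt_atTop 0, eventually_ge_atTop R,
    hcosh_atTop.eventually_ge_atTop (4 * Real.cosh (k * R))] with L hL hRL hcosh
  have hle : minmax V (InDirichletDomain L) j ≤
      E + 4 * ((4 * K + 2 * k ^ 2) * (Real.cosh (k * R) / Real.cosh (k * L))) := by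
    rw [← sub_le_iff_le_add]
    refine le_of_forall_gt_imp_ge_of_dense fun l hl => sub_le_iff_le_add.2 ?_
    have hl' := min_le_right l (E + 1)
    have hle := minmax_inDirichletDomain_le_add (l := min l (E + 1)) (K := K) hV hx₀ hj hk.ne' hL
      hRL (lt_min hl (lt_add_one E)) (abs_nonneg _)
      (fun x => by linarith [hx₀ x, le_abs_self (E + 1 - V x₀)])
      (fun x hx => by linarith [hR x hx]) hcosh
    linarith [min_le_left l (E + 1)]
  refine hle.trans (add_le_add_right ?_ E)
  calc 4 * ((4 * K + 2 * k ^ 2) * (Real.cosh (k * R) / Real.cosh (k * L)))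
      = 4 * ((4 * K + 2 * k ^ 2) * Real.cosh (k * R)) * (Real.cosh (k * L))⁻¹ := by ring
    _ ≤ 4 * ((4 * K + 2 * k ^ 2) * Real.cosh (k * R)) * (2 * Real.exp (-(k * L))) := by
        gcongr
        exact inv_cosh_le _
    _ = 8 * ((4 * K + 2 * k ^ 2) * Real.cosh (k * R)) * Real.exp (-(k * L)) := by ring

theorem dirichlet_eigenvalue_exponentially_close_general (V : ℝ → ℝ) (hVc : Continuous V)
    (hVinf : Tendsto V (cocompact ℝ) atTop) (j : ℕ) (hj : 1 ≤ j) (a : ℝ) (ha : 0 < a) :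
    ∃ c > (0 : ℝ), ∃ L₀ > (0 : ℝ), ∀ L : ℝ, L₀ < L →
      minmax V (InFormDomain V) j < minmax V (InDirichletDomain L) j ∧
        minmax V (InDirichletDomain L) j <
          minmax V (InFormDomain V) j + c * Real.exp (-2 * a * L) := by
  obtain ⟨x₀, hx₀⟩ := hVc.exists_forall_le hVinf
  obtain ⟨c, hc, hle⟩ := exists_minmax_inDirichletDomain_le_add_exp hVc hVinf hj (k := 2 * a)
    (by positivity)
  obtain ⟨L₀, hL₀, hle⟩ := (atTop_basis_Ioi' (0 : ℝ)).eventually_iff.1 hle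
  refine ⟨c + 1, by positivity, L₀, hL₀, fun L hL => ⟨?_, (hle hL).trans_lt ?_⟩⟩
  · exact minmax_inFormDomain_lt_minmax_inDirichletDomain hVc hx₀ hj (hL₀.trans hL)
  · rw [show -2 * a * L = -(2 * a * L) by ring]
    gcongr
    linarith

end ExponentialCloseness

/-- the `j`-th Dirichlet eigenvalue `λ_j^L` on `(−L, L)` satisfies
`λ_j < λ_j^L < λ_j + c_j e^{−2aL}` for all sufficiently large `L`. -/
theorem dirichlet_eigenvalue_exponentially_close
    (V : ℝ → ℝ) (b₀ : ℝ) (hb₀ : 0 < b₀) (hVlb : ∀ x, b₀ ≤ V x)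
    (hVc : Continuous V)
    (hVinf : Filter.Tendsto V (Filter.cocompact ℝ) Filter.atTop)
    (hVgrow : ∀ b > (0 : ℝ), ∃ k > (0 : ℝ), ∀ x : ℝ, |V x| ≤ k * Real.exp (b * |x|))
    (j : ℕ) (hj : 1 ≤ j)
    (lamj : ℝ) (hlamj : lamj = minmax V (InFormDomain V) j)
    (lamjL : ℝ → ℝ) (hlamjL : ∀ L > (0 : ℝ), lamjL L = minmax V (InDirichletDomain L) j) :
    ∃ cj > (0 : ℝ), ∃ a > (0 : ℝ), ∃ L₀ > (0 : ℝ), ∀ L : ℝ, L₀ < L →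
      lamj < lamjL L ∧ lamjL L < lamj + cj * Real.exp (-2 * a * L) := by
  obtain ⟨c, hc, L₀, hL₀, hclose⟩ :=
    dirichlet_eigenvalue_exponentially_close_general V hVc hVinf j hj 1 one_pos
  exact ⟨c, hc, 1, one_pos, L₀, hL₀, fun L hL => by
    simpa only [hlamj, hlamjL L (hL₀.trans hL)] using hclose L hL⟩
end
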